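/- arXiv:1909.10397 — 6 statements merged into one kernel-verified Lean document; each statement's English description precedes it below -/
import Mathlib

section
/- The integral I := ∫₀¹ ∫₀¹ ∫_ℝ ∫_ℝ p_{1−s}(y)² p_{1−s′}(y′)² · (2π)^{−1} ( s s′ |y| |y′| − (min(s,s′))² (min(|y|,|y′|))² 𝟙_{y y′ > 0} )^{−1/2} dy dy′ ds ds′ is finite. (Here the integrand is defined for almost every (s, y, s′, y′), namely whenever the expression inside the power is strictly positive.) -/
open MeasureTheory Filter Set

/-- The one-dimensional heat kernel `p_t(x) = (2πt)^{-1/2} exp(-x²/(2t))`. -/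
noncomputable def heatKernel (t x : ℝ) : ℝ :=
  (2 * Real.pi * t) ^ (-(1:ℝ)/2) * Real.exp (-x ^ 2 / (2 * t))

/-!
With `m = min |y| |y'|`, the bounds `min(s,s')² ≤ s s'` and `𝟙 ≤ 1` give
`s s' |y| |y'| - min(s,s')² m² 𝟙 ≥ s s' m ||y| - |y'||`, since `|y| |y'| - m² = m ||y| - |y'||`.
The power `-a` of the right-hand side splits into a function of time and a spatial kernel, and up to
the symmetries `y ↔ y'` and `y' ↔ -y'` the spatial kernel is `|y|^{-a} |y' - y|^{-a}`. Integrating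
first in `y'` and then in `y` bounds it by a product of suprema of the Riesz potentials of
`p_{1-s}²` and `p_{1-s'}²`. As `p_t²` is at most `t⁻¹` and has mass at most `t^{-1/2}`, cutting the
potential at distance `√t` shows that it is `O(t^{-(1+a)/2})`. What remains in time is the square of
the Beta integral of `s^{-a} (1-s)^{-(1+a)/2}`, finite for `a < 1`; the theorem is the case
`a = 1/2`.
-/

open Metric Module
open scoped ENNReal

lemma antitone_ennreal_rpow_neg {a : ℝ} (ha : 0 ≤ a) : Antitone fun u : ℝ≥0∞ => u ^ (-a) := by
  intro u v huv
  simp only [ENNReal.rpow_neg]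
  gcongr

lemma ofReal_rpow_neg_le_rpow_neg {a : ℝ} (ha : 0 ≤ a) (x : ℝ) :
    ENNReal.ofReal (x ^ (-a)) ≤ ENNReal.ofReal x ^ (-a) := by
  rcases ha.eq_or_lt with rfl | ha
  · simp
  rcases le_or_gt x 0 with hx | hx
  · simp [ENNReal.ofReal_of_nonpos hx, ENNReal.zero_rpow_of_neg, ha]
  · rw [ENNReal.ofReal_rpow_of_pos hx]

lemma setLIntegral_Ioo_rpow_mul_one_sub_rpow {α β : ℝ} (hα : 0 < α) (hβ : 0 < β) :
    ∫⁻ x in Ioo (0 : ℝ) 1, ENNReal.ofReal (x ^ (α - 1) * (1 - x) ^ (β - 1)) =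
      ENNReal.ofReal (ProbabilityTheory.beta α β) := by
  have hB := ProbabilityTheory.beta_pos hα hβ
  have hone := ProbabilityTheory.lintegral_betaPDF_eq_one hα hβ
  simp_rw [ProbabilityTheory.lintegral_betaPDF, mul_assoc,
    ENNReal.ofReal_mul (one_div_pos.2 hB).le] at hone
  rw [lintegral_const_mul _ (by fun_prop), one_div, ENNReal.ofReal_inv_of_pos hB,
    mul_comm] at hone
  exact (ENNReal.eq_inv_of_mul_eq_one_left hone).trans (inv_inv _)

section RieszPotential

variable {E : Type*} [NormedAddCommGroup E] [MeasurableSpace E]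

/-- The Riesz potential `∫ |y - x|^{-a} μ(dy)` of order `a` of a measure `μ`, whose supremum over
`x` controls the spatial part of the integral. The power is taken in `ℝ≥0∞`, so for `a > 0` the
kernel is `∞`, rather than `0`, on the diagonal. -/
noncomputable def rieszPotential (a : ℝ) (μ : Measure E) (x : E) : ℝ≥0∞ :=
  ∫⁻ y, ‖y - x‖ₑ ^ (-a) ∂μ

lemma rieszPotential_le_of_le_smul [BorelSpace E] {μ ν : Measure E} [ν.IsAddRightInvariant]
    {M : ℝ≥0∞} (hμ : μ ≤ M • ν) {a : ℝ} (ha : 0 ≤ a) (r : ℝ) (x : E) :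
    rieszPotential a μ x ≤
      M * ∫⁻ u in ball 0 r, ‖u‖ₑ ^ (-a) ∂ν + ENNReal.ofReal r ^ (-a) * μ univ := by
  have near : ∫⁻ y in ball x r, ‖y - x‖ₑ ^ (-a) ∂μ
      ≤ M * ∫⁻ u in ball 0 r, ‖u‖ₑ ^ (-a) ∂ν := by
    have hball : ball x r = (· - x) ⁻¹' ball 0 r := by ext; simp [dist_eq_norm]
    calc ∫⁻ y in ball x r, ‖y - x‖ₑ ^ (-a) ∂μ
        ≤ ∫⁻ y in ball x r, ‖y - x‖ₑ ^ (-a) ∂(M • ν) :=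
          lintegral_mono' (Measure.restrict_mono le_rfl hμ) le_rfl
      _ = M * ∫⁻ y in ball x r, ‖y - x‖ₑ ^ (-a) ∂ν := by
          rw [Measure.restrict_smul, lintegral_smul_measure, smul_eq_mul]
      _ = M * ∫⁻ u in ball 0 r, ‖u‖ₑ ^ (-a) ∂ν := by
          rw [hball, (measurePreserving_sub_right ν x).setLIntegral_comp_preimage_emb
            (MeasurableEquiv.subRight x).measurableEmbedding fun u => ‖u‖ₑ ^ (-a)]
  have far : ∫⁻ y in (ball x r)ᶜ, ‖y - x‖ₑ ^ (-a) ∂μ ≤ ENNReal.ofReal r ^ (-a) * μ univ := by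
    calc ∫⁻ y in (ball x r)ᶜ, ‖y - x‖ₑ ^ (-a) ∂μ
        ≤ ∫⁻ _ in (ball x r)ᶜ, ENNReal.ofReal r ^ (-a) ∂μ := by
          refine setLIntegral_mono' measurableSet_ball.compl fun y hy =>
            antitone_ennreal_rpow_neg ha ?_
          rw [← ofReal_norm, ← dist_eq_norm]
          exact ENNReal.ofReal_le_ofReal (not_lt.1 hy)
      _ = ENNReal.ofReal r ^ (-a) * μ (ball x r)ᶜ := setLIntegral_const _ _
      _ ≤ ENNReal.ofReal r ^ (-a) * μ univ := by gcongr; exact subset_univ _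
  rw [rieszPotential, ← lintegral_add_compl _ measurableSet_ball]
  exact add_le_add near far

lemma setIntegral_ball_fun_norm [NormedSpace ℝ E] [FiniteDimensional ℝ E] [Nontrivial E]
    [BorelSpace E] {ν : Measure E} [ν.IsAddHaarMeasure] {F : Type*} [NormedAddCommGroup F]
    [NormedSpace ℝ F] (f : ℝ → F) (r : ℝ) :
    ∫ u in ball (0 : E) r, f ‖u‖ ∂ν =
      finrank ℝ E • ν.real (ball 0 1) • ∫ ρ in Ioo 0 r, ρ ^ (finrank ℝ E - 1) • f ρ := by
  calc ∫ u in ball (0 : E) r, f ‖u‖ ∂ν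
      = ∫ u : E, (Iio r).indicator f ‖u‖ ∂ν := by
        rw [← integral_indicator measurableSet_ball]
        congr with u
        simp [indicator]
    _ = finrank ℝ E • ν.real (ball 0 1) •
          ∫ ρ in Ioi 0, (Iio r).indicator (fun ρ => ρ ^ (finrank ℝ E - 1) • f ρ) ρ := by
        rw [integral_fun_norm_addHaar]
        simp only [indicator_smul]
    _ = finrank ℝ E • ν.real (ball 0 1) • ∫ ρ in Ioo 0 r, ρ ^ (finrank ℝ E - 1) • f ρ := by
        rw [setIntegral_indicator measurableSet_Iio, Ioi_inter_Iio]

lemma setLIntegral_ball_enorm_rpow_neg [NormedSpace ℝ E] [FiniteDimensional ℝ E] [Nontrivial E]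
    [BorelSpace E] (ν : Measure E) [ν.IsAddHaarMeasure] {a r : ℝ} (ha : a < finrank ℝ E)
    (hr : 0 < r) :
    ∫⁻ u in ball (0 : E) r, ‖u‖ₑ ^ (-a) ∂ν = ENNReal.ofReal
      (finrank ℝ E * ν.real (ball 0 1) * (r ^ (finrank ℝ E - a) / (finrank ℝ E - a))) := by
  have hdim : (1 : ℕ) ≤ finrank ℝ E := finrank_pos
  have hexp : -1 < finrank ℝ E - 1 - a := by linarith
  have hradial : EqOn (fun ρ : ℝ => ρ ^ (finrank ℝ E - 1) • ρ ^ (-a))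
      (fun ρ => ρ ^ (finrank ℝ E - 1 - a)) (Ioi 0) := fun ρ hρ => by
    simp only [smul_eq_mul]
    rw [← Real.rpow_natCast, ← Real.rpow_add hρ, Nat.cast_sub hdim, Nat.cast_one,
      ← sub_eq_add_neg]
  have hint : IntegrableOn (fun u : E => ‖u‖ ^ (-a)) (ball 0 r) ν := by
    rw [integrableOn_fun_norm_addHaar ν (f := (· ^ (-a))),
      integrableOn_congr_fun (hradial.mono Ioo_subset_Ioi_self) measurableSet_Ioo]
    exact (intervalIntegral.integrableOn_Ioo_rpow_iff hr).2 hexp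
  have hval : ∫ u in ball (0 : E) r, ‖u‖ ^ (-a) ∂ν =
      finrank ℝ E * ν.real (ball 0 1) * (r ^ (finrank ℝ E - a) / (finrank ℝ E - a)) := by
    rw [setIntegral_ball_fun_norm (· ^ (-a)),
      setIntegral_congr_fun measurableSet_Ioo (hradial.mono Ioo_subset_Ioi_self),
      ← integral_Ioc_eq_integral_Ioo, ← intervalIntegral.integral_of_le hr.le,
      integral_rpow (Or.inl hexp), sub_right_comm, sub_add_cancel,
      Real.zero_rpow (sub_ne_zero.2 ha.ne'), sub_zero, nsmul_eq_mul, smul_eq_mul, mul_assoc]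
  rw [← hval, ofReal_integral_eq_lintegral_ofReal hint (ae_of_all _ fun u => by positivity)]
  refine setLIntegral_congr_fun_ae measurableSet_ball ?_
  filter_upwards [Measure.ae_ne ν 0] with u hu _
  rw [← ofReal_norm, ENNReal.ofReal_rpow_of_pos (norm_pos_iff.2 hu)]

end RieszPotential

section HeatKernel

lemma measurable_heatKernel (t : ℝ) : Measurable (heatKernel t) := by
  unfold heatKernel
  fun_prop

lemma heatKernel_sq {t : ℝ} (ht : 0 < t) (y : ℝ) :
    heatKernel t y ^ 2 = (2 * Real.pi * t)⁻¹ * Real.exp (-t⁻¹ * y ^ 2) := by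
  have hpow : ((2 * Real.pi * t) ^ (-(1 : ℝ) / 2)) ^ 2 = (2 * Real.pi * t)⁻¹ := by
    rw [← Real.rpow_natCast, ← Real.rpow_mul (by positivity), ← Real.rpow_neg_one]
    norm_num
  have hexp : Real.exp (-y ^ 2 / (2 * t)) ^ 2 = Real.exp (-t⁻¹ * y ^ 2) := by
    rw [← Real.exp_nat_mul]
    congr 1
    push_cast
    field_simp
  rw [heatKernel, mul_pow, hpow, hexp]

/-- The measure `p_t(y)² dy` on the line, which the theorem integrates against at `t = 1 - s` in
each spatial variable. -/
noncomputable def heatKernelSqMeasure (t : ℝ) : Measure ℝ :=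
  volume.withDensity fun y => ENNReal.ofReal (heatKernel t y ^ 2)

instance (t : ℝ) : SFinite (heatKernelSqMeasure t) := by
  unfold heatKernelSqMeasure; infer_instance

lemma lintegral_heatKernelSqMeasure (t : ℝ) (f : ℝ → ℝ≥0∞) :
    ∫⁻ y, f y ∂heatKernelSqMeasure t = ∫⁻ y, ENNReal.ofReal (heatKernel t y ^ 2) * f y :=
  lintegral_withDensity_eq_lintegral_mul_non_measurable _
    ((measurable_heatKernel t).pow_const 2).ennreal_ofReal
    (ae_of_all _ fun _ => ENNReal.ofReal_lt_top) f

lemma heatKernelSqMeasure_le_smul {t : ℝ} (ht : 0 < t) :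
    heatKernelSqMeasure t ≤ ENNReal.ofReal t⁻¹ • volume := by
  rw [← withDensity_const]
  refine withDensity_mono (ae_of_all _ fun y => ENNReal.ofReal_le_ofReal ?_)
  have hexp : Real.exp (-t⁻¹ * y ^ 2) ≤ 1 := by
    rw [Real.exp_le_one_iff, neg_mul, neg_nonpos]
    positivity
  rw [heatKernel_sq ht]
  refine mul_le_of_le_one_right (by positivity) hexp |>.trans ?_
  gcongr
  nlinarith [Real.pi_gt_three]

lemma heatKernelSqMeasure_univ {t : ℝ} (ht : 0 < t) :
    heatKernelSqMeasure t univ = ENNReal.ofReal (2 * √(Real.pi * t))⁻¹ := by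
  have hint : Integrable fun y => heatKernel t y ^ 2 := by
    simp_rw [heatKernel_sq ht]
    exact (integrable_exp_neg_mul_sq (inv_pos.2 ht)).const_mul _
  rw [heatKernelSqMeasure, withDensity_apply _ .univ, Measure.restrict_univ,
    ← ofReal_integral_eq_lintegral_ofReal hint (ae_of_all _ fun y => sq_nonneg _)]
  simp_rw [heatKernel_sq ht]
  rw [integral_const_mul, integral_gaussian, div_inv_eq_mul]
  congr 1
  rw [mul_assoc 2, mul_inv, mul_assoc, inv_mul_eq_div (Real.pi * t), Real.sqrt_div_self', one_div,
    ← mul_inv]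

lemma rieszPotential_heatKernelSqMeasure_le {a t : ℝ} (ha₀ : 0 ≤ a) (ha₁ : a < 1) (ht : 0 < t)
    (x : ℝ) : rieszPotential a (heatKernelSqMeasure t) x ≤
      ENNReal.ofReal ((2 / (1 - a) + 1) * t ^ (-(1 + a) / 2)) := by
  have hr : 0 < √t := Real.sqrt_pos.2 ht
  have hball : ∫⁻ u in ball (0 : ℝ) √t, ‖u‖ₑ ^ (-a)
      = ENNReal.ofReal (2 * (√t ^ (1 - a) / (1 - a))) := by
    simpa using setLIntegral_ball_enorm_rpow_neg (volume : Measure ℝ) (by simpa using ha₁) hr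
  have hmass : heatKernelSqMeasure t univ ≤ ENNReal.ofReal (√t)⁻¹ := by
    rw [heatKernelSqMeasure_univ ht]
    gcongr
    rw [Real.sqrt_mul Real.pi_pos.le, ← mul_assoc]
    refine le_mul_of_one_le_left hr.le ?_
    have := Real.one_le_sqrt.2 (by linarith [Real.pi_gt_three] : 1 ≤ Real.pi)
    linarith
  have hnear : t⁻¹ * √t ^ (1 - a) = t ^ (-(1 + a) / 2) := by
    rw [Real.sqrt_eq_rpow, ← Real.rpow_neg_one, ← Real.rpow_mul ht.le, ← Real.rpow_add ht]
    ring_nf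
  have hfar : √t ^ (-a) * (√t)⁻¹ = t ^ (-(1 + a) / 2) := by
    rw [Real.sqrt_eq_rpow, ← Real.rpow_neg_one, ← Real.rpow_mul ht.le, ← Real.rpow_mul ht.le,
      ← Real.rpow_add ht]
    ring_nf
  have := sub_pos.2 ha₁
  calc rieszPotential a (heatKernelSqMeasure t) x
      ≤ ENNReal.ofReal t⁻¹ * ENNReal.ofReal (2 * (√t ^ (1 - a) / (1 - a))) +
          ENNReal.ofReal √t ^ (-a) * ENNReal.ofReal (√t)⁻¹ := by
        rw [← hball]
        exact (rieszPotential_le_of_le_smul (heatKernelSqMeasure_le_smul ht) ha₀ √t x).trans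
          (by gcongr)
    _ = ENNReal.ofReal (t⁻¹ * (2 * (√t ^ (1 - a) / (1 - a))) + √t ^ (-a) * (√t)⁻¹) := by
        rw [ENNReal.ofReal_rpow_of_pos hr, ← ENNReal.ofReal_mul (by positivity),
          ← ENNReal.ofReal_mul (by positivity),
          ← ENNReal.ofReal_add (by positivity) (by positivity)]
    _ = ENNReal.ofReal ((2 / (1 - a) + 1) * t ^ (-(1 + a) / 2)) := by
        congr 1
        linear_combination 2 / (1 - a) * hnear + hfar

end HeatKernel

section SpatialEnergy

lemma lintegral_enorm_abs_sub_rpow_neg_le (a : ℝ) (μ : Measure ℝ) (x : ℝ) :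
    ∫⁻ y, ‖|y| - x‖ₑ ^ (-a) ∂μ ≤ rieszPotential a μ x + rieszPotential a μ (-x) := by
  rw [rieszPotential, rieszPotential, ← lintegral_add_left (by fun_prop)]
  gcongr with y
  rcases abs_choice y with h | h
  · rw [h]
    exact le_self_add
  · rw [h, ← enorm_neg, neg_sub, sub_neg_eq_add, sub_neg_eq_add, add_comm x]
    exact le_add_self

variable {a : ℝ} {μ ν : Measure ℝ}

lemma lintegral_lintegral_enorm_rpow_neg_mul_le {K L : ℝ≥0∞}
    (hK : ∀ x, rieszPotential a μ x ≤ K) (hL : ∀ x, rieszPotential a ν x ≤ L) :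
    ∫⁻ y, ∫⁻ y', ‖y‖ₑ ^ (-a) * ‖|y'| - |y|‖ₑ ^ (-a) ∂ν ∂μ ≤ 2 * (K * L) := by
  calc ∫⁻ y, ∫⁻ y', ‖y‖ₑ ^ (-a) * ‖|y'| - |y|‖ₑ ^ (-a) ∂ν ∂μ
      = ∫⁻ y, ‖y‖ₑ ^ (-a) * ∫⁻ y', ‖|y'| - |y|‖ₑ ^ (-a) ∂ν ∂μ :=
        lintegral_congr fun y => lintegral_const_mul _ (by fun_prop)
    _ ≤ ∫⁻ y, ‖y‖ₑ ^ (-a) * (L + L) ∂μ := by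
        gcongr with y
        exact (lintegral_enorm_abs_sub_rpow_neg_le a ν |y|).trans (add_le_add (hL _) (hL _))
    _ = rieszPotential a μ 0 * (L + L) := by
        rw [lintegral_mul_const _ (by fun_prop), rieszPotential]
        simp only [sub_zero]
    _ ≤ K * (L + L) := by gcongr; exact hK 0
    _ = 2 * (K * L) := by ring

lemma lintegral_lintegral_min_rpow_neg_mul_le [SFinite μ] [SFinite ν] {K L : ℝ≥0∞}
    (hK : ∀ x, rieszPotential a μ x ≤ K) (hL : ∀ x, rieszPotential a ν x ≤ L) :
    ∫⁻ y, ∫⁻ y', min ‖y‖ₑ ‖y'‖ₑ ^ (-a) * ‖|y| - |y'|‖ₑ ^ (-a) ∂ν ∂μ ≤ 4 * (K * L) := by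
  have hmin (y y' : ℝ) : min ‖y‖ₑ ‖y'‖ₑ ^ (-a) * ‖|y| - |y'|‖ₑ ^ (-a) ≤
      ‖y‖ₑ ^ (-a) * ‖|y'| - |y|‖ₑ ^ (-a) + ‖y'‖ₑ ^ (-a) * ‖|y| - |y'|‖ₑ ^ (-a) := by
    rw [← enorm_neg (|y'| - |y|), neg_sub, ← add_mul]
    gcongr
    rcases min_choice ‖y‖ₑ ‖y'‖ₑ with h | h <;> rw [h]
    exacts [le_self_add, le_add_self]
  have hswap : ∫⁻ y, ∫⁻ y', ‖y'‖ₑ ^ (-a) * ‖|y| - |y'|‖ₑ ^ (-a) ∂ν ∂μ ≤ 2 * (L * K) := by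
    rw [lintegral_lintegral_swap (by fun_prop)]
    exact lintegral_lintegral_enorm_rpow_neg_mul_le hL hK
  calc ∫⁻ y, ∫⁻ y', min ‖y‖ₑ ‖y'‖ₑ ^ (-a) * ‖|y| - |y'|‖ₑ ^ (-a) ∂ν ∂μ
      ≤ ∫⁻ y, ∫⁻ y', ‖y‖ₑ ^ (-a) * ‖|y'| - |y|‖ₑ ^ (-a) +
          ‖y'‖ₑ ^ (-a) * ‖|y| - |y'|‖ₑ ^ (-a) ∂ν ∂μ := by gcongr; exact hmin _ _
    _ = (∫⁻ y, ∫⁻ y', ‖y‖ₑ ^ (-a) * ‖|y'| - |y|‖ₑ ^ (-a) ∂ν ∂μ) +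
          ∫⁻ y, ∫⁻ y', ‖y'‖ₑ ^ (-a) * ‖|y| - |y'|‖ₑ ^ (-a) ∂ν ∂μ := by
        rw [← lintegral_add_left (by fun_prop)]
        exact lintegral_congr fun y => lintegral_add_left (by fun_prop) _
    _ ≤ 2 * (K * L) + 2 * (L * K) :=
        add_le_add (lintegral_lintegral_enorm_rpow_neg_mul_le hK hL) hswap
    _ = 4 * (K * L) := by ring

end SpatialEnergy

section CovarianceDeterminant

/-- The determinant of the covariance matrix of `(W(s,y), W(s',y'))` for a Wiener sheet `W` on
`[0,∞) × ℝ`, whose variances are `s|y|`, `s'|y'|` and whose covariance is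
`min(s,s') min(|y|,|y'|) 𝟙_{yy'>0}`. The value at the origin of their joint density is
`(2π)⁻¹ wienerCovDet^{-1/2}`. -/
noncomputable def wienerCovDet (s s' y y' : ℝ) : ℝ :=
  s * s' * |y| * |y'| -
    (min s s') ^ 2 * (min |y| |y'|) ^ 2 * (if 0 < y * y' then (1 : ℝ) else 0)

variable {a s s' : ℝ}

lemma mul_min_mul_abs_sub_le_wienerCovDet (hs : 0 ≤ s) (hs' : 0 ≤ s') (y y' : ℝ) :
    s * s' * (min |y| |y'| * |(|y| - |y'|)|) ≤ wienerCovDet s s' y y' := by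
  have hmin : min s s' ^ 2 ≤ s * s' := by
    rw [sq]
    exact mul_le_mul (min_le_left _ _) (min_le_right _ _) (le_min hs hs') hs
  have hcov : min s s' ^ 2 * min |y| |y'| ^ 2 * (if 0 < y * y' then (1 : ℝ) else 0)
      ≤ s * s' * min |y| |y'| ^ 2 := by
    refine (mul_le_of_le_one_right (by positivity) (by split_ifs <;> norm_num)).trans ?_
    gcongr
  have hprod : min |y| |y'| * |(|y| - |y'|)| + min |y| |y'| ^ 2 = |y| * |y'| := by
    rcases le_total |y| |y'| with h | h
    · rw [min_eq_left h, abs_of_nonpos (sub_nonpos.2 h)]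
      ring
    · rw [min_eq_right h, abs_of_nonneg (sub_nonneg.2 h)]
      ring
  rw [wienerCovDet]
  linear_combination hcov + s * s' * hprod

lemma ofReal_wienerCovDet_rpow_neg_le (ha : 0 ≤ a) (hs : 0 < s) (hs' : 0 < s') (y y' : ℝ) :
    ENNReal.ofReal (wienerCovDet s s' y y' ^ (-a)) ≤ ENNReal.ofReal (s ^ (-a) * s' ^ (-a)) *
      (min ‖y‖ₑ ‖y'‖ₑ ^ (-a) * ‖|y| - |y'|‖ₑ ^ (-a)) := by
  calc ENNReal.ofReal (wienerCovDet s s' y y' ^ (-a))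
      ≤ ENNReal.ofReal (wienerCovDet s s' y y') ^ (-a) := ofReal_rpow_neg_le_rpow_neg ha _
    _ ≤ ENNReal.ofReal (s * s' * (min |y| |y'| * |(|y| - |y'|)|)) ^ (-a) :=
        antitone_ennreal_rpow_neg ha
          (ENNReal.ofReal_le_ofReal (mul_min_mul_abs_sub_le_wienerCovDet hs.le hs'.le y y'))
    _ = (ENNReal.ofReal (s * s') * (min ‖y‖ₑ ‖y'‖ₑ * ‖|y| - |y'|‖ₑ)) ^ (-a) := by
        simp only [Real.enorm_eq_ofReal_abs]
        rw [ENNReal.ofReal_mul (by positivity),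
          ENNReal.ofReal_mul (le_min (abs_nonneg y) (abs_nonneg y')), ENNReal.ofReal_min]
    _ = ENNReal.ofReal (s ^ (-a) * s' ^ (-a)) *
          (min ‖y‖ₑ ‖y'‖ₑ ^ (-a) * ‖|y| - |y'|‖ₑ ^ (-a)) := by
        have hmin : min ‖y‖ₑ ‖y'‖ₑ ≠ ⊤ := (min_lt_of_left_lt enorm_lt_top).ne
        rw [ENNReal.mul_rpow_of_ne_top (by finiteness) (by finiteness),
          ENNReal.mul_rpow_of_ne_top hmin (by finiteness),
          ENNReal.ofReal_rpow_of_pos (by positivity), Real.mul_rpow hs.le hs'.le]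

end CovarianceDeterminant

section Integral

variable {a s s' : ℝ}

lemma ofReal_heatKernel_sq_mul_wienerCovDet_rpow_neg_le (ha : 0 ≤ a) (hs : 0 < s) (hs' : 0 < s')
    (t t' y y' : ℝ) :
    ENNReal.ofReal (heatKernel t y ^ 2 * heatKernel t' y' ^ 2 * (2 * Real.pi)⁻¹ *
        wienerCovDet s s' y y' ^ (-a)) ≤
      ENNReal.ofReal (heatKernel t y ^ 2) * (ENNReal.ofReal (heatKernel t' y' ^ 2) *
        (ENNReal.ofReal (s ^ (-a) * s' ^ (-a)) *
          (min ‖y‖ₑ ‖y'‖ₑ ^ (-a) * ‖|y| - |y'|‖ₑ ^ (-a)))) := by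
  have hπ : (2 * Real.pi)⁻¹ ≤ 1 := inv_le_one_of_one_le₀ (by linarith [Real.pi_gt_three])
  rw [mul_assoc, mul_assoc, ENNReal.ofReal_mul (sq_nonneg _), ENNReal.ofReal_mul (sq_nonneg _),
    ENNReal.ofReal_mul (by positivity)]
  gcongr _ * (_ * ?_)
  exact (mul_le_of_le_one_left' (ENNReal.ofReal_le_one.2 hπ)).trans
    (ofReal_wienerCovDet_rpow_neg_le ha hs hs' y y')

lemma lintegral_lintegral_heatKernel_sq_mul_wienerCovDet_rpow_neg_le (ha₀ : 0 ≤ a) (ha₁ : a < 1)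
    (hs : s ∈ Ioo (0 : ℝ) 1) (hs' : s' ∈ Ioo (0 : ℝ) 1) :
    ∫⁻ y, ∫⁻ y', ENNReal.ofReal (heatKernel (1 - s) y ^ 2 * heatKernel (1 - s') y' ^ 2 *
        (2 * Real.pi)⁻¹ * wienerCovDet s s' y y' ^ (-a)) ≤
      4 * ENNReal.ofReal (2 / (1 - a) + 1) ^ 2 *
        (ENNReal.ofReal (s ^ (-a) * (1 - s) ^ (-(1 + a) / 2)) *
          ENNReal.ofReal (s' ^ (-a) * (1 - s') ^ (-(1 + a) / 2))) := by
  obtain ⟨hs₀, hs₁⟩ := hs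
  obtain ⟨hs₀', hs₁'⟩ := hs'
  set μ := heatKernelSqMeasure (1 - s)
  set ν := heatKernelSqMeasure (1 - s')
  have hC : 0 ≤ 2 / (1 - a) + 1 := by
    have := sub_pos.2 ha₁
    positivity
  calc _ ≤ ∫⁻ y, ∫⁻ y', ENNReal.ofReal (s ^ (-a) * s' ^ (-a)) *
          (min ‖y‖ₑ ‖y'‖ₑ ^ (-a) * ‖|y| - |y'|‖ₑ ^ (-a)) ∂ν ∂μ := by
        simp only [μ, ν, lintegral_heatKernelSqMeasure]
        simp_rw [← lintegral_const_mul' _ _ ENNReal.ofReal_ne_top]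
        gcongr
        exact ofReal_heatKernel_sq_mul_wienerCovDet_rpow_neg_le ha₀ hs₀ hs₀' _ _ _ _
    _ = ENNReal.ofReal (s ^ (-a) * s' ^ (-a)) *
          ∫⁻ y, ∫⁻ y', min ‖y‖ₑ ‖y'‖ₑ ^ (-a) * ‖|y| - |y'|‖ₑ ^ (-a) ∂ν ∂μ := by
        simp_rw [lintegral_const_mul' _ _ ENNReal.ofReal_ne_top]
    _ ≤ ENNReal.ofReal (s ^ (-a) * s' ^ (-a)) *
          (4 * (ENNReal.ofReal ((2 / (1 - a) + 1) * (1 - s) ^ (-(1 + a) / 2)) *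
            ENNReal.ofReal ((2 / (1 - a) + 1) * (1 - s') ^ (-(1 + a) / 2)))) := by
        gcongr
        exact lintegral_lintegral_min_rpow_neg_mul_le
          (rieszPotential_heatKernelSqMeasure_le ha₀ ha₁ (sub_pos.2 hs₁))
          (rieszPotential_heatKernelSqMeasure_le ha₀ ha₁ (sub_pos.2 hs₁'))
    _ = _ := by
        simp only [ENNReal.ofReal_mul (Real.rpow_nonneg hs₀.le (-a)),
          ENNReal.ofReal_mul (Real.rpow_nonneg hs₀'.le (-a)), ENNReal.ofReal_mul hC]
        ring

theorem integral_density_bound_finite_general (ha₀ : 0 ≤ a) (ha₁ : a < 1) :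
    (∫⁻ s in Ioo (0 : ℝ) 1, ∫⁻ s' in Ioo (0 : ℝ) 1, ∫⁻ y : ℝ, ∫⁻ y' : ℝ,
      ENNReal.ofReal (heatKernel (1 - s) y ^ 2 * heatKernel (1 - s') y' ^ 2 *
        (2 * Real.pi)⁻¹ * wienerCovDet s s' y y' ^ (-a))) < ⊤ := by
  set w : ℝ → ℝ≥0∞ := fun s => ENNReal.ofReal (s ^ (-a) * (1 - s) ^ (-(1 + a) / 2))
  have hw : ∫⁻ s in Ioo (0 : ℝ) 1, w s < ⊤ := by
    have hbeta := setLIntegral_Ioo_rpow_mul_one_sub_rpow (α := 1 - a) (β := (1 - a) / 2)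
      (by linarith) (by linarith)
    rw [show 1 - a - 1 = -a by ring, show (1 - a) / 2 - 1 = -(1 + a) / 2 by ring] at hbeta
    exact hbeta.trans_lt ENNReal.ofReal_lt_top
  calc _ ≤ ∫⁻ s in Ioo (0 : ℝ) 1, ∫⁻ s' in Ioo (0 : ℝ) 1,
          4 * ENNReal.ofReal (2 / (1 - a) + 1) ^ 2 * (w s * w s') :=
        setLIntegral_mono' measurableSet_Ioo fun s hs => setLIntegral_mono' measurableSet_Ioo
          fun s' hs' => lintegral_lintegral_heatKernel_sq_mul_wienerCovDet_rpow_neg_le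
            ha₀ ha₁ hs hs'
    _ = 4 * ENNReal.ofReal (2 / (1 - a) + 1) ^ 2 *
          ((∫⁻ s in Ioo (0 : ℝ) 1, w s) * ∫⁻ s in Ioo (0 : ℝ) 1, w s) := by
        simp_rw [lintegral_const_mul' (4 * ENNReal.ofReal (2 / (1 - a) + 1) ^ 2) _ (by finiteness)]
        simp_rw [lintegral_const_mul' (w _) _ ENNReal.ofReal_ne_top]
        rw [lintegral_mul_const _ (by fun_prop)]
    _ < ⊤ := by finiteness

end Integral

/-- The integral
`I = ∫₀¹∫₀¹∫_ℝ∫_ℝ p_{1-s}(y)² p_{1-s'}(y')² (2π)⁻¹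
  (s s' |y| |y'| - (min(s,s'))² (min(|y|,|y'|))² 𝟙_{yy'>0})^{-1/2} dy dy' ds ds'`
is finite. -/
theorem integral_density_bound_finite :
    (∫⁻ s in Ioo (0:ℝ) 1, ∫⁻ s' in Ioo (0:ℝ) 1, ∫⁻ y : ℝ, ∫⁻ y' : ℝ,
      ENNReal.ofReal (heatKernel (1 - s) y ^ 2 * heatKernel (1 - s') y' ^ 2 *
        (2 * Real.pi)⁻¹ *
        (s * s' * |y| * |y'| -
            (min s s') ^ 2 * (min |y| |y'|) ^ 2 * (if 0 < y * y' then (1:ℝ) else 0))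
          ^ (-(1:ℝ)/2))) < ⊤ := by
  simpa only [neg_div, wienerCovDet] using
    integral_density_bound_finite_general (a := 1 / 2) (by norm_num) (by norm_num)
end

section
/- The integral J := ∫_{0<s<s′<1} ∫_{0<y<y′<∞} (1−s)^{−1} (1−s′)^{−1} ( s y ( s′ y′ − s y ) )^{−1/2} exp( −y²/(1−s) − y′²/(1−s′) ) dy dy′ ds ds′ is finite. -/
open MeasureTheory Filter Set

/-!
On the domain, `s' y' - s y ≥ s' (y' - y)` and `y' ^ 2 ≥ y ^ 2 + (y' - y) ^ 2`, so in the variables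
`y` and `z = y' - y` the integrand is dominated by a product of two one-dimensional Gaussian moments
of variance proportional to `1 - s'`, which together contribute `(1 - s') ^ (1 / 2)`.  This offsets
`(1 - s')⁻¹`, but `(1 - s)⁻¹` remains borderline; since `1 - s' ≤ 1 - s`, a small power of `1 - s`
can be traded for the same power of `1 - s'`, and two convergent beta integrals are left.
-/

section Integrals

lemma lintegral_Ioo_rpow_mul_one_sub_rpow_lt_top {a b : ℝ} (ha : -1 < a) (hb : -1 < b) :
    ∫⁻ x in Ioo (0:ℝ) 1, ENNReal.ofReal (x ^ a * (1 - x) ^ b) < ⊤ := by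
  have ha' : 0 < a + 1 := by linarith
  have hb' : 0 < b + 1 := by linarith
  have hB := ProbabilityTheory.beta_pos ha' hb'
  have hpdf := ProbabilityTheory.lintegral_betaPDF_eq_one ha' hb'
  simp_rw [ProbabilityTheory.lintegral_betaPDF, add_sub_cancel_right, mul_assoc,
    ENNReal.ofReal_mul (one_div_pos.2 hB).le] at hpdf
  rw [lintegral_const_mul' _ _ ENNReal.ofReal_ne_top] at hpdf
  refine ENNReal.lt_top_of_mul_ne_top_right (hpdf ▸ ENNReal.one_ne_top) ?_
  simpa using hB

lemma lintegral_Ioi_rpow_mul_exp_neg_mul_rpow {p q b : ℝ} (hp : 0 < p) (hq : -1 < q)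
    (hb : 0 < b) :
    ∫⁻ x in Ioi (0:ℝ), ENNReal.ofReal (x ^ q * Real.exp (-b * x ^ p)) =
      ENNReal.ofReal (b ^ (-(q + 1) / p) * (1 / p) * Real.Gamma ((q + 1) / p)) := by
  rw [← integral_rpow_mul_exp_neg_mul_rpow hp hq hb]
  refine (ofReal_integral_eq_lintegral_ofReal
    (integrableOn_rpow_mul_exp_neg_mul_rpow hq hp hb) ?_).symm
  filter_upwards [ae_restrict_mem measurableSet_Ioi] with x hx
  exact mul_nonneg (Real.rpow_nonneg (mem_Ioi.1 hx).le q) (Real.exp_nonneg _)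

lemma setLIntegral_Ioi_comp_sub_right (f : ℝ → ENNReal) (a : ℝ) :
    ∫⁻ x in Ioi a, f (x - a) = ∫⁻ x in Ioi (0:ℝ), f x := by
  simpa using (measurePreserving_sub_right volume a).setLIntegral_comp_preimage_emb
    (MeasurableEquiv.subRight a).measurableEmbedding f (Ioi 0)

lemma lintegral_Ioi_lintegral_Ioi_mul_comp_sub {f g : ℝ → ENNReal} (a : ℝ)
    (hf : Measurable f) (hg : Measurable g) :
    ∫⁻ x in Ioi a, ∫⁻ y in Ioi x, f x * g (y - x) =
      (∫⁻ x in Ioi a, f x) * ∫⁻ z in Ioi (0:ℝ), g z := by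
  rw [← lintegral_mul_const _ hf]
  refine lintegral_congr fun x => ?_
  rw [lintegral_const_mul _ (by fun_prop), setLIntegral_Ioi_comp_sub_right]

lemma setLIntegral_setLIntegral_mul_le {α β : Type*} [MeasurableSpace α] [MeasurableSpace β]
    {μ : Measure α} {ν : Measure β} {f : α → ENNReal} {g : β → ENNReal} {A : Set α} {B : Set β}
    {t : α → Set β} (hA : MeasurableSet A) (hf : Measurable f) (hg : Measurable g)
    (ht : ∀ x ∈ A, t x ⊆ B) :
    ∫⁻ x in A, ∫⁻ y in t x, f x * g y ∂ν ∂μ ≤ (∫⁻ x in A, f x ∂μ) * ∫⁻ y in B, g y ∂ν := by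
  rw [← lintegral_mul_const _ hf]
  refine setLIntegral_mono' hA fun x hx => ?_
  rw [lintegral_const_mul _ hg]
  gcongr
  exact ht x hx

end Integrals

/-- The weight `x ^ q * exp (-x ^ 2 / b)`, meant for `0 < x`: a Gaussian of variance `b / 2` times
a power, the form in which the spatial variables of `J` separate. -/
noncomputable def gaussianPower (q b x : ℝ) : ℝ :=
  x ^ q * Real.exp (-x ^ 2 / b)

namespace gaussianPower

lemma nonneg (q b : ℝ) {x : ℝ} (hx : 0 ≤ x) : 0 ≤ gaussianPower q b x :=
  mul_nonneg (Real.rpow_nonneg hx q) (Real.exp_nonneg _)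

lemma measurable (q b : ℝ) : Measurable (gaussianPower q b) := by
  unfold gaussianPower
  fun_prop

lemma lintegral_Ioi {q b : ℝ} (hq : -1 < q) (hb : 0 < b) :
    ∫⁻ x in Ioi (0:ℝ), ENNReal.ofReal (gaussianPower q b x) =
      ENNReal.ofReal (b ^ ((q + 1) / 2) * (Real.Gamma ((q + 1) / 2) / 2)) := by
  have hexponent (x : ℝ) : -x ^ 2 / b = -b⁻¹ * x ^ (2:ℝ) := by
    rw [Real.rpow_two]
    ring
  simp_rw [gaussianPower, hexponent]
  rw [lintegral_Ioi_rpow_mul_exp_neg_mul_rpow two_pos hq (inv_pos.2 hb), Real.inv_rpow hb.le,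
    ← Real.rpow_neg hb.le, neg_div, neg_neg]
  ring_nf

lemma lintegral_Ioi_lintegral_Ioi_mul_comp_sub {q b : ℝ} (hq : -1 < q) (hb : 0 < b) :
    ∫⁻ y in Ioi (0:ℝ), ∫⁻ y' in Ioi y,
      ENNReal.ofReal (gaussianPower q b y) * ENNReal.ofReal (gaussianPower q b (y' - y)) =
      ENNReal.ofReal (b ^ (q + 1) * (Real.Gamma ((q + 1) / 2) / 2) ^ 2) := by
  have hmeas : Measurable fun x => ENNReal.ofReal (gaussianPower q b x) :=
    (measurable q b).ennreal_ofReal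
  have hΓ : 0 < Real.Gamma ((q + 1) / 2) := Real.Gamma_pos_of_pos (by linarith)
  rw [_root_.lintegral_Ioi_lintegral_Ioi_mul_comp_sub 0 hmeas hmeas, lintegral_Ioi hq hb,
    ← ENNReal.ofReal_mul (by positivity), mul_mul_mul_comm, ← Real.rpow_add hb, add_halves, ← sq]

end gaussianPower

section Domination

lemma exp_neg_sq_div_sub_sq_div_le {a b y y' : ℝ} (ha : 0 ≤ a) (hb : 0 ≤ b) (hy : 0 ≤ y)
    (hyy' : y ≤ y') :
    Real.exp (-y ^ 2 / a - y' ^ 2 / b) ≤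
      Real.exp (-y ^ 2 / b) * Real.exp (-(y' - y) ^ 2 / b) := by
  have hsq : y ^ 2 + (y' - y) ^ 2 ≤ y' ^ 2 := by nlinarith
  rw [← Real.exp_add, Real.exp_le_exp]
  calc -y ^ 2 / a - y' ^ 2 / b ≤ -(y' ^ 2 / b) := by
        have : 0 ≤ y ^ 2 / a := by positivity
        rw [neg_div]
        linarith
    _ ≤ -((y ^ 2 + (y' - y) ^ 2) / b) := by gcongr
    _ = -y ^ 2 / b + -(y' - y) ^ 2 / b := by ring

lemma mul_mul_sub_rpow_le {q s s' y y' : ℝ} (hq : q ≤ 0) (hs : 0 < s) (hss' : s ≤ s')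
    (hy : 0 < y) (hyy' : y < y') :
    (s * y * (s' * y' - s * y)) ^ q ≤ s ^ q * s' ^ q * (y ^ q * (y' - y) ^ q) := by
  have hs' : 0 < s' := hs.trans_le hss'
  have hz : 0 < y' - y := sub_pos.2 hyy'
  have hsub : s' * (y' - y) ≤ s' * y' - s * y := by nlinarith
  calc (s * y * (s' * y' - s * y)) ^ q ≤ (s * y * (s' * (y' - y))) ^ q :=
        Real.rpow_le_rpow_of_nonpos (by positivity) (by gcongr) hq
    _ = s ^ q * s' ^ q * (y ^ q * (y' - y) ^ q) := by
        rw [Real.mul_rpow (by positivity) (by positivity), Real.mul_rpow hs.le hy.le,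
          Real.mul_rpow hs'.le hz.le]
        ring

lemma inv_le_rpow_sub_one_mul_rpow_neg {a b θ : ℝ} (hθ : 0 ≤ θ) (hb : 0 < b) (hab : b ≤ a) :
    a⁻¹ ≤ a ^ (θ - 1) * b ^ (-θ) := by
  have ha : 0 < a := hb.trans_le hab
  calc a⁻¹ = a ^ (θ - 1) * a ^ (-θ) := by
        rw [← Real.rpow_add ha, ← Real.rpow_neg_one]
        ring_nf
    _ ≤ a ^ (θ - 1) * b ^ (-θ) :=
        mul_le_mul_of_nonneg_left (Real.rpow_le_rpow_of_nonpos hb hab (neg_nonpos.2 hθ))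
          (by positivity)

/-- The integrand of `J`, with an arbitrary exponent `q` in place of `-1/2`. -/
noncomputable def integrandJ (q s s' y y' : ℝ) : ℝ :=
  (1 - s)⁻¹ * (1 - s')⁻¹ * (s * y * (s' * y' - s * y)) ^ q *
    Real.exp (-y ^ 2 / (1 - s) - y' ^ 2 / (1 - s'))

variable {q θ s s' : ℝ}

lemma integrandJ_le {y y' : ℝ} (hq : q ≤ 0) (hθ : 0 ≤ θ) (hs : 0 < s) (hss' : s ≤ s')
    (hs' : s' < 1) (hy : 0 < y) (hyy' : y < y') :
    integrandJ q s s' y y' ≤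
      s ^ q * (1 - s) ^ (θ - 1) * (s' ^ q * ((1 - s') ^ (-θ) * (1 - s')⁻¹)) *
        (gaussianPower q (1 - s') y * gaussianPower q (1 - s') (y' - y)) := by
  have hb : 0 < 1 - s' := sub_pos.2 hs'
  have hba : 1 - s' ≤ 1 - s := by linarith
  have ha : 0 < 1 - s := hb.trans_le hba
  have hs₀ : 0 < s' := hs.trans_le hss'
  have hdiff : 0 < s' * y' - s * y :=
    sub_pos.2 ((mul_le_mul_of_nonneg_right hss' hy.le).trans_lt (mul_lt_mul_of_pos_left hyy' hs₀))
  calc integrandJ q s s' y y' ≤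
        (1 - s) ^ (θ - 1) * (1 - s') ^ (-θ) * (1 - s')⁻¹ *
          (s ^ q * s' ^ q * (y ^ q * (y' - y) ^ q)) *
          (Real.exp (-y ^ 2 / (1 - s')) * Real.exp (-(y' - y) ^ 2 / (1 - s'))) := by
        unfold integrandJ
        gcongr
        · exact inv_le_rpow_sub_one_mul_rpow_neg hθ hb hba
        · exact mul_mul_sub_rpow_le hq hs hss' hy hyy'
        · exact exp_neg_sq_div_sub_sq_div_le ha.le hb.le hy.le hyy'.le
    _ = _ := by
        unfold gaussianPower
        ring

lemma lintegral_Ioi_lintegral_Ioi_integrandJ_le (hq : -1 < q) (hq₀ : q ≤ 0) (hθ : 0 ≤ θ)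
    (hs : 0 < s) (hss' : s ≤ s') (hs' : s' < 1) :
    ∫⁻ y in Ioi (0:ℝ), ∫⁻ y' in Ioi y, ENNReal.ofReal (integrandJ q s s' y y') ≤
      ENNReal.ofReal (s ^ q * (1 - s) ^ (θ - 1)) *
        (ENNReal.ofReal ((Real.Gamma ((q + 1) / 2) / 2) ^ 2) *
          ENNReal.ofReal (s' ^ q * (1 - s') ^ (q - θ))) := by
  have hb : 0 < 1 - s' := sub_pos.2 hs'
  have ha : 0 < 1 - s := by linarith
  have hs₀ : 0 < s' := hs.trans_le hss'
  set A := s ^ q * (1 - s) ^ (θ - 1)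
  set B := s' ^ q * ((1 - s') ^ (-θ) * (1 - s')⁻¹)
  have hA : 0 ≤ A := by positivity
  have hB : 0 ≤ B := by positivity
  have hpow : B * (1 - s') ^ (q + 1) = s' ^ q * (1 - s') ^ (q - θ) := by
    rw [mul_assoc, ← Real.rpow_neg_one, ← Real.rpow_add hb, ← Real.rpow_add hb]
    ring_nf
  calc _ ≤ ∫⁻ y in Ioi (0:ℝ), ∫⁻ y' in Ioi y, ENNReal.ofReal (A * B) *
          (ENNReal.ofReal (gaussianPower q (1 - s') y) *
            ENNReal.ofReal (gaussianPower q (1 - s') (y' - y))) := by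
        refine setLIntegral_mono' measurableSet_Ioi fun y hy =>
          setLIntegral_mono' measurableSet_Ioi fun y' hy' => ?_
        rw [← ENNReal.ofReal_mul (gaussianPower.nonneg _ _ (mem_Ioi.1 hy).le),
          ← ENNReal.ofReal_mul (mul_nonneg hA hB)]
        exact ENNReal.ofReal_le_ofReal (integrandJ_le hq₀ hθ hs hss' hs' hy hy')
    _ = ENNReal.ofReal (A * B) *
          ENNReal.ofReal ((1 - s') ^ (q + 1) * (Real.Gamma ((q + 1) / 2) / 2) ^ 2) := by
        simp_rw [lintegral_const_mul' _ _ ENNReal.ofReal_ne_top]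
        rw [← gaussianPower.lintegral_Ioi_lintegral_Ioi_mul_comp_sub hq hb]
        simp_rw [lintegral_const_mul' _ _ ENNReal.ofReal_ne_top]
    _ = _ := by
        rw [← hpow, ← ENNReal.ofReal_mul (by positivity), ← ENNReal.ofReal_mul (by positivity),
          ← ENNReal.ofReal_mul hA]
        ring_nf

end Domination

theorem integral_J_finite_general {q : ℝ} (hq : -1 < q) (hq₀ : q ≤ 0) :
    ∫⁻ s in Ioo (0:ℝ) 1, ∫⁻ s' in Ioo s 1, ∫⁻ y in Ioi (0:ℝ), ∫⁻ y' in Ioi y,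
      ENNReal.ofReal (integrandJ q s s' y y') < ⊤ := by
  -- Both beta integrals below converge exactly when `0 < θ < q + 1`.
  obtain ⟨θ, hθ, hθq⟩ : ∃ θ : ℝ, 0 < θ ∧ θ < q + 1 := exists_between (by linarith)
  let f (s : ℝ) := ENNReal.ofReal (s ^ q * (1 - s) ^ (θ - 1))
  let g (s' : ℝ) := ENNReal.ofReal (s' ^ q * (1 - s') ^ (q - θ))
  let C := ENNReal.ofReal ((Real.Gamma ((q + 1) / 2) / 2) ^ 2)
  have hf : ∫⁻ s in Ioo (0:ℝ) 1, f s < ⊤ :=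
    lintegral_Ioo_rpow_mul_one_sub_rpow_lt_top hq (by linarith)
  have hg : ∫⁻ s' in Ioo (0:ℝ) 1, g s' < ⊤ :=
    lintegral_Ioo_rpow_mul_one_sub_rpow_lt_top hq (by linarith)
  calc _ ≤ ∫⁻ s in Ioo (0:ℝ) 1, ∫⁻ s' in Ioo s 1, f s * (C * g s') :=
        setLIntegral_mono' measurableSet_Ioo fun s hs =>
          setLIntegral_mono' measurableSet_Ioo fun s' hs' =>
            lintegral_Ioi_lintegral_Ioi_integrandJ_le hq hq₀ hθ.le hs.1 hs'.1.le hs'.2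
    _ ≤ (∫⁻ s in Ioo (0:ℝ) 1, f s) * ∫⁻ s' in Ioo (0:ℝ) 1, C * g s' :=
        setLIntegral_setLIntegral_mul_le measurableSet_Ioo (by fun_prop) (by fun_prop)
          fun s hs => Ioo_subset_Ioo_left hs.1.le
    _ = (∫⁻ s in Ioo (0:ℝ) 1, f s) * (C * ∫⁻ s' in Ioo (0:ℝ) 1, g s') := by
        rw [lintegral_const_mul' _ _ ENNReal.ofReal_ne_top]
    _ < ⊤ := ENNReal.mul_lt_top hf (ENNReal.mul_lt_top ENNReal.ofReal_lt_top hg)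

/-- The integral
`J = ∫_{0<s<s'<1} ∫_{0<y<y'<∞} (1-s)⁻¹ (1-s')⁻¹ (s y (s' y' - s y))^{-1/2}
  exp(-y²/(1-s) - y'²/(1-s')) dy dy' ds ds'` is finite. -/
theorem integral_J_finite :
    (∫⁻ s in Ioo (0:ℝ) 1, ∫⁻ s' in Ioo s 1, ∫⁻ y in Ioi (0:ℝ), ∫⁻ y' in Ioi y,
      ENNReal.ofReal ((1 - s)⁻¹ * (1 - s')⁻¹ *
        (s * y * (s' * y' - s * y)) ^ (-(1:ℝ)/2) *
        Real.exp (-y ^ 2 / (1 - s) - y' ^ 2 / (1 - s')))) < ⊤ :=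
  integral_J_finite_general (by norm_num) (by norm_num)
end

section
/- For every α ≥ 0, one has lim_{λ→0⁺} ∫₀¹ ∫_ℝ ( s |y| )^α · ( ∫_{−1}^{1} p_{λ(1−s)}( x − y ) dx − 𝟙_{[−1,1]}(y) )² dy ds = 0. -/
open MeasureTheory Filter Set

/-!
The heat flow of `𝟙_A` at `(t, y)` is the probability that a Gaussian of mean `y` and variance `t`
falls in `A`. A path from `y` that leaves or enters `A` crosses the frontier of `A`, so this
probability differs from `𝟙_A(y)` by at most the chance that the Gaussian moves farther than the
distance `d` from `y` to the frontier, which is at most `2 exp(-d² / (2t))`. The square of this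
bound tends to `0` off the frontier as `t → 0⁺`, and dominated convergence gives weighted `L²`
convergence. Since `λ(1 - s) ≤ λ`, this convergence is uniform in `s` at the times `λ(1 - s)`, and
the remaining weight `s^α` is integrable on `(0, 1)`.
-/

open Metric ProbabilityTheory Topology
open scoped NNReal

section Topology

lemma inter_frontier_nonempty_of_isPreconnected {X : Type*} [TopologicalSpace X] {s A : Set X}
    (hs : IsPreconnected s) (hsA : (s ∩ A).Nonempty) (hsA' : (s ∩ Aᶜ).Nonempty) :
    (s ∩ frontier A).Nonempty := by
  by_contra h
  have hcover : s ⊆ interior A ∪ interior Aᶜ := by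
    rw [← compl_frontier_eq_union_interior]
    exact (disjoint_iff_inter_eq_empty.2 (not_nonempty_iff_eq_empty.1 h)).subset_compl_right
  obtain ⟨x, hxs, hxA⟩ := hsA
  obtain ⟨y, hys, hyA⟩ := hsA'
  have hx : x ∈ interior A :=
    (hcover hxs).resolve_right fun hx => interior_subset hx hxA
  have hsub : s ⊆ interior A :=
    hs.subset_left_of_subset_union isOpen_interior isOpen_interior
      (disjoint_compl_right.mono interior_subset interior_subset) hcover ⟨x, hxs, hx⟩
  exact hyA (interior_subset (hsub hys))

lemma infDist_frontier_le_dist {E : Type*} [SeminormedAddCommGroup E] [NormedSpace ℝ E]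
    {A : Set E} {x y : E} (hxy : ¬(x ∈ A ↔ y ∈ A)) : infDist y (frontier A) ≤ dist y x := by
  have hmeet : (segment ℝ y x ∩ A).Nonempty ∧ (segment ℝ y x ∩ Aᶜ).Nonempty := by
    by_cases hy : y ∈ A
    · have hx : x ∉ A := by tauto
      exact ⟨⟨y, left_mem_segment ℝ y x, hy⟩, ⟨x, right_mem_segment ℝ y x, hx⟩⟩
    · have hx : x ∈ A := by tauto
      exact ⟨⟨x, right_mem_segment ℝ y x, hx⟩, ⟨y, left_mem_segment ℝ y x, hy⟩⟩
  obtain ⟨z, hz, hzA⟩ := inter_frontier_nonempty_of_isPreconnected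
    (convex_segment y x).isPreconnected hmeet.1 hmeet.2
  calc infDist y (frontier A) ≤ dist y z := infDist_le_dist_of_mem hzA
    _ ≤ dist y x := by linarith [dist_add_dist_of_mem_segment hz, dist_nonneg (x := z) (y := x)]

end Topology

section Gaussian

lemma hasSubgaussianMGF_sub_gaussianReal (m : ℝ) (v : ℝ≥0) :
    HasSubgaussianMGF (fun x => x - m) v (gaussianReal m v) where
  integrable_exp_mul t := by
    simpa only [mul_sub, Real.exp_sub] using
      (integrable_exp_mul_gaussianReal (μ := m) (v := v) t).div_const (Real.exp (t * m))
  mgf_le t := by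
    simp_rw [sub_eq_add_neg]
    rw [mgf_add_const, mgf_fun_id_gaussianReal, ← Real.exp_add]
    exact Real.exp_le_exp.2 (by linarith)

lemma gaussianReal_real_abs_sub_ge_le (m : ℝ) (v : ℝ≥0) {δ : ℝ} (hδ : 0 ≤ δ) :
    (gaussianReal m v).real {x | δ ≤ |x - m|} ≤ 2 * Real.exp (-δ ^ 2 / (2 * v)) := by
  have hmgf := hasSubgaussianMGF_sub_gaussianReal m v
  have hunion : {x | δ ≤ |x - m|} ⊆ {x | δ ≤ x - m} ∪ {x | δ ≤ (-fun x => x - m) x} :=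
    fun x (hx : δ ≤ |x - m|) => show δ ≤ x - m ∨ δ ≤ -(x - m) from le_abs.1 hx
  calc (gaussianReal m v).real {x | δ ≤ |x - m|}
      ≤ (gaussianReal m v).real {x | δ ≤ x - m} +
          (gaussianReal m v).real {x | δ ≤ (-fun x => x - m) x} :=
        (measureReal_mono hunion).trans (measureReal_union_le _ _)
    _ ≤ Real.exp (-δ ^ 2 / (2 * v)) + Real.exp (-δ ^ 2 / (2 * v)) :=
        add_le_add (hmgf.measure_ge_le hδ) (hmgf.neg.measure_ge_le hδ)
    _ = 2 * Real.exp (-δ ^ 2 / (2 * v)) := (two_mul _).symm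

lemma abs_measureReal_sub_indicator {X : Type*} [MeasurableSpace X] {μ : Measure X}
    [IsProbabilityMeasure μ] {A : Set X} (hA : NullMeasurableSet A μ) (y : X) :
    |μ.real A - A.indicator 1 y| = μ.real {x | ¬(x ∈ A ↔ y ∈ A)} := by
  by_cases hy : y ∈ A
  · have hset : {x | ¬(x ∈ A ↔ y ∈ A)} = Aᶜ := by ext; simp [hy]
    rw [hset, indicator_of_mem hy, Pi.one_apply, abs_sub_comm, ← probReal_compl_eq_one_sub₀ hA,
      abs_of_nonneg measureReal_nonneg]
  · have hset : {x | ¬(x ∈ A ↔ y ∈ A)} = A := by ext; simp [hy]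
    rw [hset, indicator_of_notMem hy, sub_zero, abs_of_nonneg measureReal_nonneg]

lemma abs_gaussianReal_real_sub_indicator_le {v : ℝ≥0} {y : ℝ} {A : Set ℝ}
    (hA : NullMeasurableSet A (gaussianReal y v)) :
    |(gaussianReal y v).real A - A.indicator 1 y| ≤
      2 * Real.exp (-infDist y (frontier A) ^ 2 / (2 * v)) := by
  have hsub : {x | ¬(x ∈ A ↔ y ∈ A)} ⊆ {x | infDist y (frontier A) ≤ |x - y|} := fun x hx =>
    (infDist_frontier_le_dist hx).trans_eq (dist_comm y x)
  rw [abs_measureReal_sub_indicator hA]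
  exact (measureReal_mono hsub).trans (gaussianReal_real_abs_sub_ge_le y v infDist_nonneg)

end Gaussian

section HeatFlow

/-- The solution at time `t` and position `y` of the heat equation `∂ₜu = ½ ∂²u` with initial
value `𝟙_A`. It is defined by the kernel formula for every `t`, and is meaningful for `t > 0`. -/
noncomputable def indicatorHeatFlow (A : Set ℝ) (t y : ℝ) : ℝ :=
  ∫ x in A, heatKernel t (x - y)

lemma heatKernel_sub_eq_gaussianPDFReal (v : ℝ≥0) (x y : ℝ) :
    heatKernel v (x - y) = gaussianPDFReal y v x := by
  rw [heatKernel, gaussianPDFReal, neg_div, Real.rpow_neg (by positivity), Real.sqrt_eq_rpow]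

lemma indicatorHeatFlow_eq_gaussianReal {v : ℝ≥0} (hv : v ≠ 0) (A : Set ℝ) (y : ℝ) :
    indicatorHeatFlow A v y = (gaussianReal y v).real A := by
  simp_rw [indicatorHeatFlow, heatKernel_sub_eq_gaussianPDFReal]
  rw [measureReal_def, gaussianReal_apply_eq_integral _ hv, ENNReal.toReal_ofReal]
  exact integral_nonneg fun x => gaussianPDFReal_nonneg _ _ _

lemma sq_indicatorHeatFlow_sub_indicator_le {A : Set ℝ} (hA : NullMeasurableSet A) {t : ℝ}
    (ht : 0 < t) (y : ℝ) :
    (indicatorHeatFlow A t y - A.indicator 1 y) ^ 2 ≤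
      4 * Real.exp (-(infDist y (frontier A) ^ 2 / t)) := by
  lift t to ℝ≥0 using ht.le
  have ht0 : t ≠ 0 := (NNReal.coe_pos.1 ht).ne'
  have hdev := abs_gaussianReal_real_sub_indicator_le
    (hA.mono_ac (gaussianReal_absolutelyContinuous y ht0))
  rw [indicatorHeatFlow_eq_gaussianReal ht0, ← sq_abs]
  calc |(gaussianReal y t).real A - A.indicator 1 y| ^ 2
      ≤ (2 * Real.exp (-infDist y (frontier A) ^ 2 / (2 * t))) ^ 2 := by gcongr
    _ = 4 * Real.exp (-(infDist y (frontier A) ^ 2 / t)) := by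
        rw [mul_pow, ← Real.exp_nat_mul]
        congr 2
        · norm_num
        · push_cast
          field_simp

lemma indicatorHeatFlow_eq_indicator {A : Set ℝ} (hA : frontier A = ∅) {t : ℝ} (ht : 0 < t)
    (y : ℝ) : indicatorHeatFlow A t y = A.indicator 1 y := by
  lift t to ℝ≥0 using ht.le
  rw [indicatorHeatFlow_eq_gaussianReal (NNReal.coe_pos.1 ht).ne']
  rcases frontier_eq_empty_iff.1 hA with rfl | rfl <;> simp

end HeatFlow

section Laplace

variable {X : Type*} [MeasurableSpace X] {μ : Measure X} {w f : X → ℝ}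

lemma norm_mul_exp_neg_div_le {a t : ℝ} (ha : 0 ≤ a) (ht : t ∈ Ioc (0 : ℝ) 1) (c : ℝ) :
    ‖c * Real.exp (-(a / t))‖ ≤ ‖c * Real.exp (-a)‖ := by
  rw [norm_mul, norm_mul, Real.norm_of_nonneg (Real.exp_nonneg _),
    Real.norm_of_nonneg (Real.exp_nonneg _)]
  gcongr
  exact le_div_self ha ht.1 ht.2

lemma integrable_mul_exp_neg_div (hw : AEStronglyMeasurable w μ) (hf : AEStronglyMeasurable f μ)
    (hf0 : ∀ᵐ x ∂μ, 0 ≤ f x) (hint : Integrable (fun x => w x * Real.exp (-f x)) μ) {t : ℝ}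
    (ht : t ∈ Ioc (0 : ℝ) 1) : Integrable (fun x => w x * Real.exp (-(f x / t))) μ :=
  hint.mono (by fun_prop) (hf0.mono fun _ hx => norm_mul_exp_neg_div_le hx ht _)

lemma tendsto_exp_neg_div_nhdsGT_zero {a : ℝ} (ha : 0 < a) :
    Tendsto (fun t : ℝ => Real.exp (-(a / t))) (𝓝[>] 0) (𝓝 0) := by
  simp_rw [div_eq_mul_inv]
  exact Real.tendsto_exp_neg_atTop_nhds_zero.comp (tendsto_inv_nhdsGT_zero.const_mul_atTop ha)

lemma tendsto_integral_mul_exp_neg_div (hw : AEStronglyMeasurable w μ)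
    (hf : AEStronglyMeasurable f μ) (hf0 : ∀ᵐ x ∂μ, 0 < f x)
    (hint : Integrable (fun x => w x * Real.exp (-f x)) μ) :
    Tendsto (fun t : ℝ => ∫ x, w x * Real.exp (-(f x / t)) ∂μ) (𝓝[>] 0) (𝓝 0) := by
  suffices hlim : Tendsto (fun t : ℝ => ∫ x, w x * Real.exp (-(f x / t)) ∂μ) (𝓝[>] 0)
      (𝓝 (∫ _, 0 ∂μ)) by simpa only [integral_zero] using hlim
  refine tendsto_integral_filter_of_dominated_convergence _ (.of_forall fun t => by fun_prop) ?_
    hint.norm ?_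
  · filter_upwards [Ioc_mem_nhdsGT zero_lt_one] with t ht
    exact hf0.mono fun x hx => norm_mul_exp_neg_div_le hx.le ht _
  · filter_upwards [hf0] with x hx
    simpa only [mul_zero] using (tendsto_exp_neg_div_nhdsGT_zero hx).const_mul (w x)

end Laplace

section Weight

lemma integrable_comp_abs {E : Type*} [NormedAddCommGroup E] {f : ℝ → E}
    (hf : IntegrableOn f (Ioi 0)) : Integrable fun x => f |x| := by
  have hpos : IntegrableOn (fun x => f |x|) (Ioi 0) :=
    hf.congr_fun (fun x hx => by simp only [abs_of_pos (mem_Ioi.1 hx)]) measurableSet_Ioi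
  have hneg : IntegrableOn (fun x => f |x|) (Iio 0) := by
    rw [← (Measure.measurePreserving_neg (volume : Measure ℝ)).integrableOn_comp_preimage
      (Homeomorph.neg ℝ).measurableEmbedding]
    simpa only [Function.comp_def, abs_neg, neg_preimage, neg_Iio, neg_zero] using hpos
  rw [← integrableOn_univ, ← Iio_union_Ici (a := 0), integrableOn_union,
    integrableOn_Ici_iff_integrableOn_Ioi]
  exact ⟨hneg, hpos⟩

lemma integrable_abs_rpow_mul_exp_neg_mul_sq {α b : ℝ} (hα : -1 < α) (hb : 0 < b) :
    Integrable fun y : ℝ => |y| ^ α * Real.exp (-b * y ^ 2) := by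
  simpa only [sq_abs] using integrable_comp_abs (integrableOn_rpow_mul_exp_neg_mul_sq hb hα)

lemma exists_exp_neg_sq_infDist_le {E : Type*} [SeminormedAddCommGroup E] {K : Set E}
    (hne : K.Nonempty) (hK : Bornology.IsBounded K) :
    ∃ C : ℝ, ∀ y, Real.exp (-infDist y K ^ 2) ≤ C * Real.exp (-(1 / 2) * ‖y‖ ^ 2) := by
  obtain ⟨p, hp⟩ := hne
  refine ⟨Real.exp ((diam K + ‖p‖) ^ 2), fun y => ?_⟩
  have hy : ‖y‖ ≤ infDist y K + (diam K + ‖p‖) := by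
    have := dist_le_infDist_add_diam (x := y) hK hp
    rw [dist_eq_norm] at this
    linarith [norm_le_norm_sub_add y p]
  have hsq : ‖y‖ ^ 2 ≤ 2 * (infDist y K ^ 2 + (diam K + ‖p‖) ^ 2) :=
    (pow_le_pow_left₀ (norm_nonneg y) hy 2).trans add_sq_le
  rw [← Real.exp_add, Real.exp_le_exp]
  linarith

variable {α : ℝ} {K : Set ℝ}

lemma integrable_abs_rpow_mul_exp_neg_sq_infDist (hα : -1 < α) (hne : K.Nonempty)
    (hK : Bornology.IsBounded K) :
    Integrable fun y : ℝ => |y| ^ α * Real.exp (-infDist y K ^ 2) := by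
  obtain ⟨C, hC⟩ := exists_exp_neg_sq_infDist_le hne hK
  refine ((integrable_abs_rpow_mul_exp_neg_mul_sq hα one_half_pos).const_mul C).mono'
    (by fun_prop) (.of_forall fun y => ?_)
  rw [Real.norm_of_nonneg (by positivity), mul_left_comm]
  gcongr
  simpa only [Real.norm_eq_abs, sq_abs] using hC y

lemma integrable_abs_rpow_mul_exp_neg_sq_infDist_div (hα : -1 < α) (hne : K.Nonempty)
    (hK : Bornology.IsBounded K) {t : ℝ} (ht : t ∈ Ioc (0 : ℝ) 1) :
    Integrable fun y : ℝ => |y| ^ α * Real.exp (-(infDist y K ^ 2 / t)) :=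
  integrable_mul_exp_neg_div (measurable_abs.pow_const α).aestronglyMeasurable (by fun_prop)
    (.of_forall fun _ => sq_nonneg _) (integrable_abs_rpow_mul_exp_neg_sq_infDist hα hne hK) ht

lemma tendsto_integral_abs_rpow_mul_exp_neg_sq_infDist_div (hα : -1 < α) (hne : K.Nonempty)
    (hK : Bornology.IsBounded K) (hclosed : IsClosed K) (hnull : volume K = 0) :
    Tendsto (fun t : ℝ => ∫ y : ℝ, |y| ^ α * Real.exp (-(infDist y K ^ 2 / t)))
      (𝓝[>] 0) (𝓝 0) := by
  refine tendsto_integral_mul_exp_neg_div (measurable_abs.pow_const α).aestronglyMeasurable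
    (by fun_prop) ?_
    (integrable_abs_rpow_mul_exp_neg_sq_infDist hα hne hK)
  filter_upwards [measure_eq_zero_iff_ae_notMem.1 hnull] with y hy
  exact pow_pos ((hclosed.notMem_iff_infDist_pos hne).1 hy) 2

end Weight

lemma tendsto_integral_abs_rpow_mul_sq_indicatorHeatFlow_sub_indicator {α : ℝ} (hα : -1 < α)
    {A : Set ℝ} (hbdd : Bornology.IsBounded (frontier A)) (hnull : volume (frontier A) = 0) :
    Tendsto (fun t : ℝ => ∫ y : ℝ, |y| ^ α * (indicatorHeatFlow A t y - A.indicator 1 y) ^ 2)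
      (𝓝[>] 0) (𝓝 0) := by
  -- The bound through `infDist y (frontier A)` is useless for an empty frontier: `infDist y ∅ = 0`.
  rcases (frontier A).eq_empty_or_nonempty with hempty | hne
  · refine tendsto_const_nhds.congr' ?_
    filter_upwards [self_mem_nhdsWithin] with t ht
    simp [indicatorHeatFlow_eq_indicator hempty ht]
  · have hlim := (tendsto_integral_abs_rpow_mul_exp_neg_sq_infDist_div hα hne hbdd
      isClosed_frontier hnull).const_mul 4
    rw [mul_zero] at hlim
    refine squeeze_zero_norm' ?_ hlim
    filter_upwards [Ioc_mem_nhdsGT zero_lt_one] with t ht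
    rw [← integral_const_mul]
    refine norm_integral_le_of_norm_le
      ((integrable_abs_rpow_mul_exp_neg_sq_infDist_div hα hne hbdd ht).const_mul 4)
      (.of_forall fun y => ?_)
    rw [Real.norm_of_nonneg (by positivity), mul_left_comm]
    gcongr
    exact sq_indicatorHeatFlow_sub_indicator_le (nullMeasurableSet_of_null_frontier hnull) ht.1 y

lemma tendsto_integral_Ioo_mul_comp_mul_one_sub {g F : ℝ → ℝ} (hg : IntegrableOn g (Ioo 0 1))
    (hF : Tendsto F (𝓝[>] 0) (𝓝 0)) :
    Tendsto (fun l : ℝ => ∫ s in Ioo (0 : ℝ) 1, g s * F (l * (1 - s))) (𝓝[>] 0) (𝓝 0) := by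
  rw [NormedAddGroup.tendsto_nhds_zero] at hF ⊢
  intro ε hε
  set C : ℝ := ∫ s in Ioo (0 : ℝ) 1, ‖g s‖
  have hC : 0 ≤ C := integral_nonneg fun _ => norm_nonneg _
  have hδ : 0 < ε / (C + 1) := by positivity
  obtain ⟨η, hη, hFη⟩ := mem_nhdsGT_iff_exists_Ioo_subset.1 (hF (ε / (C + 1)) hδ)
  filter_upwards [Ioo_mem_nhdsGT hη] with l hl
  have hbound : ∀ s ∈ Ioo (0 : ℝ) 1, ‖g s * F (l * (1 - s))‖ ≤ ‖g s‖ * (ε / (C + 1)) := by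
    intro s hs
    have hlt : l * (1 - s) < η :=
      (mul_le_of_le_one_right hl.1.le (by linarith [hs.1])).trans_lt hl.2
    have hsmall : ‖F (l * (1 - s))‖ < ε / (C + 1) :=
      hFη ⟨mul_pos hl.1 (sub_pos.2 hs.2), hlt⟩
    rw [norm_mul]
    gcongr
  calc ‖∫ s in Ioo (0 : ℝ) 1, g s * F (l * (1 - s))‖
      ≤ ∫ s in Ioo (0 : ℝ) 1, ‖g s‖ * (ε / (C + 1)) :=
        norm_integral_le_of_norm_le (hg.norm.mul_const _)
          (ae_restrict_of_forall_mem measurableSet_Ioo hbound)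
    _ = C * (ε / (C + 1)) := integral_mul_const _ _
    _ < (C + 1) * (ε / (C + 1)) := by gcongr; exact lt_add_one C
    _ = ε := by field_simp

theorem tendsto_integral_indicator_general {α : ℝ} (hα : -1 < α) {A : Set ℝ}
    (hbdd : Bornology.IsBounded (frontier A)) (hnull : volume (frontier A) = 0) :
    Tendsto (fun l : ℝ => ∫ s in Ioo (0 : ℝ) 1, ∫ y : ℝ,
        (s * |y|) ^ α *
          ((∫ x in A, heatKernel (l * (1 - s)) (x - y)) - A.indicator 1 y) ^ 2)
      (𝓝[>] 0) (𝓝 0) := by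
  have hg : IntegrableOn (fun s : ℝ => s ^ α) (Ioo 0 1) :=
    (intervalIntegral.integrableOn_Ioo_rpow_iff zero_lt_one).2 hα
  refine (tendsto_integral_Ioo_mul_comp_mul_one_sub hg
    (tendsto_integral_abs_rpow_mul_sq_indicatorHeatFlow_sub_indicator hα hbdd hnull)).congr
    fun l => setIntegral_congr_fun measurableSet_Ioo fun s hs => ?_
  simp only [← integral_const_mul, ← mul_assoc, ← Real.mul_rpow hs.1.le (abs_nonneg _),
    indicatorHeatFlow]

/-- For every `α ≥ 0`,
`lim_{λ→0⁺} ∫₀¹ ∫_ℝ (s|y|)^α (∫_{-1}^1 p_{λ(1-s)}(x-y) dx - 𝟙_{[-1,1]}(y))² dy ds = 0`. -/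
theorem tendsto_integral_indicator (α : ℝ) (hα : 0 ≤ α) :
    Tendsto (fun l : ℝ => ∫ s in Ioo (0:ℝ) 1, ∫ y : ℝ,
        (s * |y|) ^ α *
          ((∫ x in Icc (-1:ℝ) 1, heatKernel (l * (1 - s)) (x - y)) -
            (if y ∈ Icc (-1:ℝ) 1 then (1:ℝ) else 0)) ^ 2)
      (nhdsWithin 0 (Ioi 0)) (nhds 0) := by
  have hbdd : Bornology.IsBounded (frontier (Icc (-1 : ℝ) 1)) :=
    (isBounded_Icc _ _).subset isClosed_Icc.frontier_subset
  simpa only [indicator_apply, Pi.one_apply] using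
    tendsto_integral_indicator_general (by linarith) hbdd ((convex_Icc _ _).addHaar_frontier _)
end

section
/- For every α ≥ 0, one has lim_{ε→0⁺} ∫₀¹ ∫_ℝ ( s |y| )^α · ( ∫_{−1}^{1} p_{1−s}( ε x − y ) dx − 2 p_{1−s}( y ) )² dy ds = 0. -/
open MeasureTheory Filter Set

/-!
The kernel moments `∫ cosh y · p_t(a - y) p_t(b - y) dy` are explicit, because a product of two
Gaussians is again a Gaussian. Hence so is the squared distance of `p_t` to its translate by `a` in
`L²(cosh y dy)`: it is `2 e^{t/4} cosh(a/2) (cosh(a/2) p_{2t}(0) - p_{2t}(a))`, which is increasing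
in `|a|`, tends to `0` with `a`, and is at most a multiple of `t^{-1/2}`. Since `(s|y|)^α` is
bounded by a multiple of `cosh y`, Cauchy–Schwarz in `x` bounds the integral over `y` by a multiple
of this squared distance at `a = ε`, and dominated convergence in `s` concludes.
-/

theorem sq_integral_le_measureReal_univ_mul_integral_sq {X : Type*} [MeasurableSpace X]
    {μ : Measure X} [IsFiniteMeasure μ] {f : X → ℝ} (hf : MemLp f 2 μ) :
    (∫ x, f x ∂μ) ^ 2 ≤ μ.real univ * ∫ x, f x ^ 2 ∂μ := by
  have hf1 : Integrable f μ := hf.integrable one_le_two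
  have hdiff (c : ℝ) : Integrable (fun x => c ^ 2 - 2 * c * f x) μ :=
    (integrable_const _).sub (hf1.const_mul _)
  have hquadratic (c : ℝ) : ∫ x, (c - f x) ^ 2 ∂μ =
      μ.real univ * (c * c) + -2 * (∫ x, f x ∂μ) * c + ∫ x, f x ^ 2 ∂μ := by
    simp only [sub_sq]
    rw [integral_add (hdiff c) hf.integrable_sq,
      integral_sub (integrable_const _) (hf1.const_mul _), integral_const, integral_const_mul,
      smul_eq_mul]
    ring
  have hdiscrim := discrim_le_zero fun c =>
    (integral_nonneg fun x => sq_nonneg (c - f x)).trans_eq (hquadratic c)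
  rw [discrim] at hdiscrim
  linarith

theorem integral_mul_sq_integral_le {X Y : Type*} [MeasurableSpace X] [MeasurableSpace Y]
    {μ : Measure X} [IsFiniteMeasure μ] {ν : Measure Y} [SFinite ν] {v w : Y → ℝ} {g : X → Y → ℝ}
    (hv : ∀ y, 0 ≤ v y) (hvw : ∀ y, v y ≤ w y) (hg : ∀ y, MemLp (g · y) 2 μ)
    (hint : Integrable (fun z : X × Y => w z.2 * g z.1 z.2 ^ 2) (μ.prod ν)) :
    ∫ y, v y * (∫ x, g x y ∂μ) ^ 2 ∂ν ≤ μ.real univ * ∫ x, ∫ y, w y * g x y ^ 2 ∂ν ∂μ := by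
  rw [integral_integral_swap hint, ← integral_const_mul]
  refine integral_mono_of_nonneg (ae_of_all _ fun y => mul_nonneg (hv y) (sq_nonneg _))
    (hint.integral_prod_right.const_mul _) (ae_of_all _ fun y => ?_)
  calc v y * (∫ x, g x y ∂μ) ^ 2
      ≤ w y * (μ.real univ * ∫ x, g x y ^ 2 ∂μ) :=
        mul_le_mul (hvw y) (sq_integral_le_measureReal_univ_mul_integral_sq (hg y)) (sq_nonneg _)
          ((hv y).trans (hvw y))
    _ = μ.real univ * ∫ x, w y * g x y ^ 2 ∂μ := by rw [integral_const_mul]; ring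

theorem abs_rpow_le_mul_cosh {p : ℝ} (hp : 0 ≤ p) (y : ℝ) :
    |y| ^ p ≤ 2 * p ^ p * Real.cosh y := by
  have hmax : max (Real.exp y) (Real.exp (-y)) ≤ 2 * Real.cosh y := by
    rw [Real.cosh_eq]
    exact max_le (by linarith [Real.exp_pos (-y)]) (by linarith [Real.exp_pos y])
  calc |y| ^ p ≤ p ^ p * max (Real.exp y) (Real.exp (-y)) := by
        simpa using ProbabilityTheory.rpow_abs_le_mul_max_exp y hp one_ne_zero
    _ ≤ p ^ p * (2 * Real.cosh y) := by gcongr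
    _ = 2 * p ^ p * Real.cosh y := by ring

theorem heatKernel_neg (t x : ℝ) : heatKernel t (-x) = heatKernel t x := by
  rw [heatKernel, neg_sq, heatKernel]

theorem heatKernel_nonneg {t : ℝ} (ht : 0 ≤ t) (x : ℝ) : 0 ≤ heatKernel t x := by
  unfold heatKernel; positivity

theorem heatKernel_le_heatKernel_of_abs_le {t x y : ℝ} (ht : 0 ≤ t) (h : |x| ≤ |y|) :
    heatKernel t y ≤ heatKernel t x := by
  have hsq : x ^ 2 ≤ y ^ 2 := sq_le_sq.2 h
  unfold heatKernel
  gcongr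

@[fun_prop]
theorem continuous_heatKernel (t : ℝ) : Continuous (heatKernel t) := by
  unfold heatKernel; fun_prop

@[fun_prop]
theorem measurable_uncurry_heatKernel : Measurable (Function.uncurry heatKernel) := by
  unfold heatKernel Function.uncurry; fun_prop

theorem heatKernel_sub_eq_gaussianPDFReal_s13 {t : ℝ} (ht : 0 ≤ t) (a y : ℝ) :
    heatKernel t (a - y) = ProbabilityTheory.gaussianPDFReal a t.toNNReal y := by
  rw [heatKernel, ProbabilityTheory.gaussianPDFReal, Real.coe_toNNReal t ht, Real.sqrt_eq_rpow,
    ← Real.rpow_neg (by positivity), neg_div, ← neg_sub y a, neg_sq]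

theorem heatKernel_mul_heatKernel {s t : ℝ} (hs : 0 < s) (ht : 0 < t) (a b y : ℝ) :
    heatKernel s (a - y) * heatKernel t (b - y) =
      heatKernel (s + t) (a - b) *
        heatKernel (s * t / (s + t)) ((t * a + s * b) / (s + t) - y) := by
  have hprefactor : (2 * Real.pi * s) ^ (-(1:ℝ)/2) * (2 * Real.pi * t) ^ (-(1:ℝ)/2) =
      (2 * Real.pi * (s + t)) ^ (-(1:ℝ)/2) *
        (2 * Real.pi * (s * t / (s + t))) ^ (-(1:ℝ)/2) := by
    rw [← Real.mul_rpow (by positivity) (by positivity),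
      ← Real.mul_rpow (by positivity) (by positivity)]
    congr 1
    field_simp
  have hexponent : -(a - y) ^ 2 / (2 * s) + -(b - y) ^ 2 / (2 * t) =
      -(a - b) ^ 2 / (2 * (s + t)) +
        -((t * a + s * b) / (s + t) - y) ^ 2 / (2 * (s * t / (s + t))) := by
    field_simp
    ring
  unfold heatKernel
  rw [mul_mul_mul_comm, ← Real.exp_add, hprefactor, hexponent, Real.exp_add, mul_mul_mul_comm]

theorem integrable_exp_mul_heatKernel {t : ℝ} (ht : 0 < t) (c a : ℝ) :
    Integrable fun y => Real.exp (c * y) * heatKernel t (a - y) := by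
  have hvar : t.toNNReal ≠ 0 := by simpa using ht
  have h := ProbabilityTheory.integrable_exp_mul_gaussianReal (μ := a) (v := t.toNNReal) c
  rw [ProbabilityTheory.gaussianReal_of_var_ne_zero _ hvar,
    integrable_withDensity_iff_integrable_smul' (ProbabilityTheory.measurable_gaussianPDF _ _)
      (by simp [ProbabilityTheory.gaussianPDF])] at h
  simpa only [ProbabilityTheory.toReal_gaussianPDF, ← heatKernel_sub_eq_gaussianPDFReal_s13 ht.le,
    smul_eq_mul, mul_comm] using h

theorem integral_exp_mul_heatKernel {t : ℝ} (ht : 0 < t) (c a : ℝ) :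
    ∫ y, Real.exp (c * y) * heatKernel t (a - y) = Real.exp (a * c + t * c ^ 2 / 2) := by
  have hvar : t.toNNReal ≠ 0 := by simpa using ht
  have h := congrFun
    (ProbabilityTheory.mgf_fun_id_gaussianReal (μ := a) (v := t.toNNReal)) c
  rw [ProbabilityTheory.mgf, ProbabilityTheory.integral_gaussianReal_eq_integral_smul hvar,
    Real.coe_toNNReal t ht.le] at h
  simpa only [← heatKernel_sub_eq_gaussianPDFReal_s13 ht.le, smul_eq_mul, mul_comm] using h

theorem cosh_mul_eq_exp_mul_add_exp_mul (y r : ℝ) :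
    Real.cosh y * r = 2⁻¹ * (Real.exp (1 * y) * r + Real.exp (-1 * y) * r) := by
  rw [Real.cosh_eq, one_mul, neg_one_mul]
  ring

theorem integrable_cosh_mul_heatKernel {t : ℝ} (ht : 0 < t) (a : ℝ) :
    Integrable fun y => Real.cosh y * heatKernel t (a - y) := by
  simp only [cosh_mul_eq_exp_mul_add_exp_mul]
  exact ((integrable_exp_mul_heatKernel ht 1 a).add
    (integrable_exp_mul_heatKernel ht (-1) a)).const_mul _

theorem integral_cosh_mul_heatKernel {t : ℝ} (ht : 0 < t) (a : ℝ) :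
    ∫ y, Real.cosh y * heatKernel t (a - y) = Real.exp (t / 2) * Real.cosh a := by
  simp only [cosh_mul_eq_exp_mul_add_exp_mul]
  rw [integral_const_mul, integral_add (integrable_exp_mul_heatKernel ht 1 a)
    (integrable_exp_mul_heatKernel ht (-1) a), integral_exp_mul_heatKernel ht,
    integral_exp_mul_heatKernel ht, Real.exp_add, Real.exp_add, Real.cosh_eq]
  ring_nf

theorem integrable_cosh_mul_heatKernel_mul_heatKernel {s t : ℝ} (hs : 0 < s) (ht : 0 < t)
    (a b : ℝ) :
    Integrable fun y => Real.cosh y * (heatKernel s (a - y) * heatKernel t (b - y)) := by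
  simp only [heatKernel_mul_heatKernel hs ht, mul_left_comm (Real.cosh _)]
  exact (integrable_cosh_mul_heatKernel (by positivity) _).const_mul _

theorem integral_cosh_mul_heatKernel_mul_heatKernel {s t : ℝ} (hs : 0 < s) (ht : 0 < t)
    (a b : ℝ) :
    ∫ y, Real.cosh y * (heatKernel s (a - y) * heatKernel t (b - y)) =
      heatKernel (s + t) (a - b) *
        (Real.exp (s * t / (s + t) / 2) * Real.cosh ((t * a + s * b) / (s + t))) := by
  simp only [heatKernel_mul_heatKernel hs ht, mul_left_comm (Real.cosh _)]
  rw [integral_const_mul, integral_cosh_mul_heatKernel (by positivity)]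

/-- The squared distance between the heat kernel at time `t` and its translate by `a`, in the
weighted space `L²(cosh y dy)`. The weight is chosen because it dominates every power of `|y|` and
has closed-form Gaussian moments. -/
noncomputable def heatShiftSqDist (t a : ℝ) : ℝ :=
  ∫ y, Real.cosh y * (heatKernel t (a - y) - heatKernel t y) ^ 2

theorem cosh_mul_sq_heatKernel_sub_eq (t a y : ℝ) :
    Real.cosh y * (heatKernel t (a - y) - heatKernel t y) ^ 2 =
      Real.cosh y * (heatKernel t (a - y) * heatKernel t (a - y)) -
        2 * (Real.cosh y * (heatKernel t (a - y) * heatKernel t (0 - y))) +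
        Real.cosh y * (heatKernel t (0 - y) * heatKernel t (0 - y)) := by
  rw [zero_sub, heatKernel_neg]
  ring

theorem integrable_cosh_mul_sq_heatKernel_sub {t : ℝ} (ht : 0 < t) (a : ℝ) :
    Integrable fun y => Real.cosh y * (heatKernel t (a - y) - heatKernel t y) ^ 2 := by
  have hprod := integrable_cosh_mul_heatKernel_mul_heatKernel ht ht
  simp only [cosh_mul_sq_heatKernel_sub_eq]
  exact ((hprod a a).sub ((hprod a 0).const_mul 2)).add (hprod 0 0)

theorem heatShiftSqDist_eq {t : ℝ} (ht : 0 < t) (a : ℝ) :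
    heatShiftSqDist t a = 2 * Real.exp (t / 4) * Real.cosh (a / 2) *
      (heatKernel (2 * t) 0 * Real.cosh (a / 2) - heatKernel (2 * t) a) := by
  have hprod := integrable_cosh_mul_heatKernel_mul_heatKernel ht ht
  have hcross : Integrable fun y =>
      Real.cosh y * (heatKernel t (a - y) * heatKernel t (a - y)) -
        2 * (Real.cosh y * (heatKernel t (a - y) * heatKernel t (0 - y))) :=
    (hprod a a).sub ((hprod a 0).const_mul 2)
  have hmoment (b c : ℝ) : ∫ y, Real.cosh y * (heatKernel t (b - y) * heatKernel t (c - y)) =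
      heatKernel (2 * t) (b - c) * (Real.exp (t / 4) * Real.cosh ((b + c) / 2)) := by
    rw [integral_cosh_mul_heatKernel_mul_heatKernel ht ht, ← two_mul,
      show t * t / (2 * t) / 2 = t / 4 by field_simp; norm_num,
      show (t * b + t * c) / (2 * t) = (b + c) / 2 by field_simp]
  have hcosh : Real.cosh a = 2 * Real.cosh (a / 2) ^ 2 - 1 := by
    have hdouble := Real.cosh_two_mul (a / 2)
    rw [mul_div_cancel₀ a two_ne_zero, Real.sinh_sq] at hdouble
    linarith
  simp only [heatShiftSqDist, cosh_mul_sq_heatKernel_sub_eq]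
  rw [integral_add hcross (hprod 0 0),
    integral_sub (hprod a a) ((hprod a 0).const_mul 2), integral_const_mul]
  simp only [hmoment, sub_self, sub_zero, add_zero, zero_div, Real.cosh_zero, add_self_div_two]
  rw [hcosh]
  ring

theorem heatShiftSqDist_nonneg (t a : ℝ) : 0 ≤ heatShiftSqDist t a :=
  integral_nonneg fun y => mul_nonneg (Real.cosh_pos y).le (sq_nonneg _)

theorem continuous_heatShiftSqDist {t : ℝ} (ht : 0 < t) : Continuous (heatShiftSqDist t) := by
  rw [funext (heatShiftSqDist_eq ht)]
  fun_prop

theorem heatShiftSqDist_zero_right (t : ℝ) : heatShiftSqDist t 0 = 0 := by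
  simp [heatShiftSqDist, heatKernel_neg]

theorem heatShiftSqDist_le_of_abs_le {t a b : ℝ} (ht : 0 < t) (h : |a| ≤ |b|) :
    heatShiftSqDist t a ≤ heatShiftSqDist t b := by
  have hcosh : Real.cosh (a / 2) ≤ Real.cosh (b / 2) := by
    rw [Real.cosh_le_cosh, abs_div, abs_div]
    gcongr
  have hp0 : 0 ≤ heatKernel (2 * t) 0 := heatKernel_nonneg (by positivity) 0
  have hpab : heatKernel (2 * t) b ≤ heatKernel (2 * t) a :=
    heatKernel_le_heatKernel_of_abs_le (by positivity) h
  have hdiff : 0 ≤ heatKernel (2 * t) 0 * Real.cosh (a / 2) - heatKernel (2 * t) a :=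
    sub_nonneg.2 <| (heatKernel_le_heatKernel_of_abs_le (by positivity) (by simp)).trans
      (le_mul_of_one_le_right hp0 (Real.one_le_cosh _))
  rw [heatShiftSqDist_eq ht, heatShiftSqDist_eq ht]
  gcongr

theorem heatShiftSqDist_le {t : ℝ} (ht : 0 < t) (a : ℝ) :
    heatShiftSqDist t a ≤
      2 * Real.exp (t / 4) * Real.cosh (a / 2) ^ 2 * heatKernel (2 * t) 0 := by
  have hpos : 0 ≤ 2 * Real.exp (t / 4) * Real.cosh (a / 2) * heatKernel (2 * t) a :=
    mul_nonneg (by positivity) (heatKernel_nonneg (by positivity) a)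
  rw [heatShiftSqDist_eq ht]
  linarith

theorem measurable_uncurry_heatShiftSqDist :
    Measurable (Function.uncurry heatShiftSqDist) := by
  have hintegrand : Measurable fun z : (ℝ × ℝ) × ℝ =>
      Real.cosh z.2 * (heatKernel z.1.1 (z.1.2 - z.2) - heatKernel z.1.1 z.2) ^ 2 := by
    fun_prop
  exact hintegrand.stronglyMeasurable.integral_prod_right'.measurable

section AveragedShift

variable {X : Type*} [MeasurableSpace X] {μ : Measure X} [IsFiniteMeasure μ] {t r : ℝ} {a : X → ℝ}

theorem memLp_heatKernel_comp (ht : 0 ≤ t) (ha : Measurable a) (p : ENNReal) :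
    MemLp (fun x => heatKernel t (a x)) p μ := by
  refine MemLp.of_bound (((continuous_heatKernel t).measurable.comp ha).aestronglyMeasurable)
    (heatKernel t 0) (ae_of_all _ fun x => ?_)
  rw [Real.norm_of_nonneg (heatKernel_nonneg ht _)]
  exact heatKernel_le_heatKernel_of_abs_le ht (by simp)

theorem integrable_heatShiftSqDist_comp (ht : 0 < t) (ha : Measurable a)
    (har : ∀ᵐ x ∂μ, |a x| ≤ |r|) : Integrable (fun x => heatShiftSqDist t (a x)) μ := by
  have hmeas : Measurable fun x => heatShiftSqDist t (a x) :=
    (continuous_heatShiftSqDist ht).measurable.comp ha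
  refine Integrable.of_bound hmeas.aestronglyMeasurable (heatShiftSqDist t r)
    (har.mono fun x hx => ?_)
  rw [Real.norm_of_nonneg (heatShiftSqDist_nonneg _ _)]
  exact heatShiftSqDist_le_of_abs_le ht hx

theorem integrable_prod_cosh_mul_sq_heatKernel_sub (ht : 0 < t) (ha : Measurable a)
    (har : ∀ᵐ x ∂μ, |a x| ≤ |r|) :
    Integrable (fun z : X × ℝ =>
      Real.cosh z.2 * (heatKernel t (a z.1 - z.2) - heatKernel t z.2) ^ 2) (μ.prod volume) := by
  rw [integrable_prod_iff (by fun_prop)]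
  refine ⟨ae_of_all _ fun x => integrable_cosh_mul_sq_heatKernel_sub ht (a x), ?_⟩
  have hnorm (x : X) (y : ℝ) :
      ‖Real.cosh y * (heatKernel t (a x - y) - heatKernel t y) ^ 2‖ =
        Real.cosh y * (heatKernel t (a x - y) - heatKernel t y) ^ 2 :=
    Real.norm_of_nonneg (mul_nonneg (Real.cosh_pos y).le (sq_nonneg _))
  simp only [hnorm]
  exact integrable_heatShiftSqDist_comp ht ha har

theorem integral_mul_sq_integral_heatKernel_sub_le (ht : 0 < t) (ha : Measurable a)
    (har : ∀ᵐ x ∂μ, |a x| ≤ |r|) {v : ℝ → ℝ} {C : ℝ} (hv : ∀ y, 0 ≤ v y)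
    (hvC : ∀ y, v y ≤ C * Real.cosh y) :
    ∫ y, v y * ((∫ x, heatKernel t (a x - y) ∂μ) - μ.real univ * heatKernel t y) ^ 2 ≤
      C * μ.real univ ^ 2 * heatShiftSqDist t r := by
  have hmemLp (y : ℝ) : MemLp (fun x => heatKernel t (a x - y)) 2 μ :=
    memLp_heatKernel_comp ht.le (ha.sub_const y) 2
  have hC : 0 ≤ C := by simpa using (hv 0).trans (hvC 0)
  have hcenter (y : ℝ) : (∫ x, heatKernel t (a x - y) ∂μ) - μ.real univ * heatKernel t y =
      ∫ x, (heatKernel t (a x - y) - heatKernel t y) ∂μ := by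
    rw [integral_sub ((hmemLp y).integrable one_le_two) (integrable_const _), integral_const,
      smul_eq_mul]
  have hint := (integrable_prod_cosh_mul_sq_heatKernel_sub ht ha har).const_mul C
  simp only [← mul_assoc] at hint
  simp only [hcenter]
  calc ∫ y, v y * (∫ x, (heatKernel t (a x - y) - heatKernel t y) ∂μ) ^ 2
      ≤ μ.real univ *
          ∫ x, ∫ y, C * Real.cosh y * (heatKernel t (a x - y) - heatKernel t y) ^ 2 ∂volume ∂μ :=
        integral_mul_sq_integral_le hv hvC (fun y => (hmemLp y).sub (memLp_const _)) hint
    _ = μ.real univ * (C * ∫ x, heatShiftSqDist t (a x) ∂μ) := by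
        simp only [mul_assoc, integral_const_mul, heatShiftSqDist]
    _ ≤ μ.real univ * (C * ∫ _, heatShiftSqDist t r ∂μ) := by
        gcongr ?_ * (?_ * ?_)
        exact integral_mono_ae (integrable_heatShiftSqDist_comp ht ha har) (integrable_const _)
          (har.mono fun x hx => heatShiftSqDist_le_of_abs_le ht hx)
    _ = C * μ.real univ ^ 2 * heatShiftSqDist t r := by
        rw [integral_const, smul_eq_mul]
        ring

end AveragedShift

theorem integrableOn_heatKernel_two_mul_zero (T : ℝ) :
    IntegrableOn (fun t => heatKernel (2 * t) 0) (Ioo 0 T) := by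
  have hrpow : IntegrableOn (fun t : ℝ => t ^ (-(1 : ℝ) / 2)) (Ioo 0 T) :=
    (intervalIntegral.intervalIntegrable_rpow' (by norm_num)).1.mono_set Ioo_subset_Ioc_self
  refine IntegrableOn.congr_fun (hrpow.const_mul ((4 * Real.pi) ^ (-(1 : ℝ) / 2)))
    (fun t ht => ?_) measurableSet_Ioo
  have hexp : Real.exp (-0 ^ 2 / (2 * (2 * t))) = 1 := by simp
  rw [heatKernel, hexp, mul_one, ← Real.mul_rpow (by positivity) ht.1.le]
  ring_nf

theorem heatShiftSqDist_le_of_mem_Ioo {T t a r : ℝ} (ht : t ∈ Ioo 0 T) (ha : |a| ≤ |r|) :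
    heatShiftSqDist t a ≤
      2 * Real.exp (T / 4) * Real.cosh (r / 2) ^ 2 * heatKernel (2 * t) 0 := by
  obtain ⟨ht0, htT⟩ := ht
  have hp0 : 0 ≤ heatKernel (2 * t) 0 := heatKernel_nonneg (by positivity) 0
  calc heatShiftSqDist t a ≤ heatShiftSqDist t r := heatShiftSqDist_le_of_abs_le ht0 ha
    _ ≤ 2 * Real.exp (t / 4) * Real.cosh (r / 2) ^ 2 * heatKernel (2 * t) 0 :=
        heatShiftSqDist_le ht0 r
    _ ≤ 2 * Real.exp (T / 4) * Real.cosh (r / 2) ^ 2 * heatKernel (2 * t) 0 := by gcongr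

theorem integrableOn_heatShiftSqDist (T a : ℝ) :
    IntegrableOn (fun t => heatShiftSqDist t a) (Ioo 0 T) := by
  refine Integrable.mono' ((integrableOn_heatKernel_two_mul_zero T).const_mul
      (2 * Real.exp (T / 4) * Real.cosh (a / 2) ^ 2))
    measurable_uncurry_heatShiftSqDist.of_uncurry_right.aestronglyMeasurable ?_
  filter_upwards [ae_restrict_mem measurableSet_Ioo] with t ht
  rw [Real.norm_of_nonneg (heatShiftSqDist_nonneg t a)]
  exact heatShiftSqDist_le_of_mem_Ioo ht le_rfl

theorem tendsto_integral_heatShiftSqDist (T : ℝ) :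
    Tendsto (fun a => ∫ t in Ioo 0 T, heatShiftSqDist t a) (nhds 0) (nhds 0) := by
  suffices h : Tendsto (fun a => ∫ t in Ioo 0 T, heatShiftSqDist t a) (nhds 0)
      (nhds (∫ _ in Ioo 0 T, 0)) by simpa only [integral_zero] using h
  refine tendsto_integral_filter_of_dominated_convergence
    (fun t => 2 * Real.exp (T / 4) * Real.cosh (1 / 2) ^ 2 * heatKernel (2 * t) 0)
    (Eventually.of_forall fun a =>
      measurable_uncurry_heatShiftSqDist.of_uncurry_right.aestronglyMeasurable)
    ?_ ((integrableOn_heatKernel_two_mul_zero T).const_mul _) ?_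
  · filter_upwards [Metric.closedBall_mem_nhds (0 : ℝ) one_pos] with a ha
    filter_upwards [ae_restrict_mem measurableSet_Ioo] with t ht
    rw [Real.norm_of_nonneg (heatShiftSqDist_nonneg t a)]
    exact heatShiftSqDist_le_of_mem_Ioo ht (by simpa using ha)
  · filter_upwards [ae_restrict_mem measurableSet_Ioo] with t ht
    exact (continuous_heatShiftSqDist ht.1).tendsto' 0 0 (heatShiftSqDist_zero_right t)

theorem mul_abs_rpow_le_mul_cosh {α s : ℝ} (hα : 0 ≤ α) (hs : s ∈ Icc 0 1) (y : ℝ) :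
    (s * |y|) ^ α ≤ 2 * α ^ α * Real.cosh y :=
  (Real.rpow_le_rpow (mul_nonneg hs.1 (abs_nonneg y))
    (mul_le_of_le_one_left (abs_nonneg y) hs.2) hα).trans (abs_rpow_le_mul_cosh hα y)

theorem integral_mul_sq_window_sub_le {α s t : ℝ} (hα : 0 ≤ α) (hs : s ∈ Icc 0 1) (ht : 0 < t)
    (ε : ℝ) :
    ∫ y : ℝ, (s * |y|) ^ α *
        ((∫ x in Icc (-1 : ℝ) 1, heatKernel t (ε * x - y)) - 2 * heatKernel t y) ^ 2 ≤
      8 * α ^ α * heatShiftSqDist t ε := by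
  have hvol : (volume.restrict (Icc (-1 : ℝ) 1)).real univ = 2 := by
    rw [measureReal_restrict_apply_univ, Real.volume_real_Icc]
    norm_num
  have hshift : ∀ᵐ x ∂volume.restrict (Icc (-1 : ℝ) 1), |ε * x| ≤ |ε| := by
    filter_upwards [ae_restrict_mem measurableSet_Icc] with x hx
    rw [abs_mul]
    exact mul_le_of_le_one_right (abs_nonneg ε) (abs_le.2 hx)
  have h := integral_mul_sq_integral_heatKernel_sub_le ht (measurable_const_mul ε) hshift
    (fun y => Real.rpow_nonneg (mul_nonneg hs.1 (abs_nonneg y)) α)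
    (mul_abs_rpow_le_mul_cosh hα hs)
  rw [hvol] at h
  linarith

theorem integral_integral_mul_sq_window_sub_le {α : ℝ} (hα : 0 ≤ α) (ε : ℝ) :
    ∫ s in Ioo (0 : ℝ) 1, ∫ y : ℝ, (s * |y|) ^ α *
        ((∫ x in Icc (-1 : ℝ) 1, heatKernel (1 - s) (ε * x - y)) - 2 * heatKernel (1 - s) y) ^ 2 ≤
      8 * α ^ α * ∫ t in Ioo 0 1, heatShiftSqDist t ε := by
  have hreflect : MeasurePreserving (fun s : ℝ => 1 - s)
      (volume.restrict (Ioo 0 1)) (volume.restrict (Ioo 0 1)) := by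
    simpa using (volume.measurePreserving_sub_left (1 : ℝ)).restrict_preimage_emb
      (measurableEmbedding_subLeft 1) (Ioo 0 1)
  rw [← hreflect.integral_comp (measurableEmbedding_subLeft 1) (heatShiftSqDist · ε),
    ← integral_const_mul]
  refine integral_mono_of_nonneg ?_ ((hreflect.integrable_comp_of_integrable
    (integrableOn_heatShiftSqDist 1 ε)).const_mul _) ?_
  · filter_upwards [ae_restrict_mem measurableSet_Ioo] with s hs
    exact integral_nonneg fun y => by
      have := hs.1
      positivity
  · filter_upwards [ae_restrict_mem measurableSet_Ioo] with s hs
    exact integral_mul_sq_window_sub_le hα (Ioo_subset_Icc_self hs) (sub_pos.2 hs.2) ε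

/-- For every `α ≥ 0`,
`lim_{ε→0⁺} ∫₀¹ ∫_ℝ (s|y|)^α (∫_{-1}^1 p_{1-s}(εx - y) dx - 2 p_{1-s}(y))² dy ds = 0`. -/
theorem tendsto_integral_shrinking (α : ℝ) (hα : 0 ≤ α) :
    Tendsto (fun ε : ℝ => ∫ s in Ioo (0:ℝ) 1, ∫ y : ℝ,
        (s * |y|) ^ α *
          ((∫ x in Icc (-1:ℝ) 1, heatKernel (1 - s) (ε * x - y)) -
            2 * heatKernel (1 - s) y) ^ 2)
      (nhdsWithin 0 (Ioi 0)) (nhds 0) := by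
  have hbound : Tendsto (fun ε => 8 * α ^ α * ∫ t in Ioo 0 1, heatShiftSqDist t ε)
      (nhdsWithin 0 (Ioi 0)) (nhds 0) := by
    simpa using ((tendsto_integral_heatShiftSqDist 1).const_mul (8 * α ^ α)).mono_left
      nhdsWithin_le_nhds
  refine squeeze_zero (fun ε => ?_) (integral_integral_mul_sq_window_sub_le hα) hbound
  exact setIntegral_nonneg measurableSet_Ioo fun s hs => integral_nonneg fun y => by
    have := hs.1
    positivity
end

section
/- Let φ : ℝ → ℝ be measurable with |φ(z)| ≤ C(1 + |z|)^α for some constants C > 0 and α ≥ 0. Then for every t > 0 and every x ∈ ℝ, the integral ∫₀ᵗ ∫_ℝ ∫_ℝ p_{t−s}( x − y )² φ(z)² p_{s|y|}( z ) dz dy ds is finite (the inner integral being taken over the set where s|y| > 0). -/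
open MeasureTheory Filter Set

/-!
If `|φ z| ≤ A exp (c|z|)`, then `∫ φ(z)² p_{s|y|}(z) dz` is at most a Gaussian exponential moment,
hence `≤ 2A² exp (2c²s|y|)`: the integral over `z` costs only exponential growth in `|y|`.
Since `p_u² = (4πu)^{-1/2} p_{u/2}`, integrating this against `p_{t-s}(x - y)²` is again a Gaussian
exponential moment, which leaves a bounded factor times the integrable singularity `(t - s)^{-1/2}`.
-/

open ProbabilityTheory
open scoped ENNReal NNReal

lemma heatKernel_nonneg_s14 {v : ℝ} (hv : 0 ≤ v) (z : ℝ) : 0 ≤ heatKernel v z := by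
  unfold heatKernel
  positivity

lemma heatKernel_neg_s14 (v z : ℝ) : heatKernel v (-z) = heatKernel v z := by
  rw [heatKernel, heatKernel, neg_sq]

lemma heatKernel_sq_s14 {v : ℝ} (hv : 0 ≤ v) (z : ℝ) :
    heatKernel v z ^ 2 = (4 * Real.pi * v) ^ (-(1 : ℝ) / 2) * heatKernel (v / 2) z := by
  have hexp : Real.exp (-z ^ 2 / (2 * v)) ^ 2 = Real.exp (-z ^ 2 / (2 * (v / 2))) := by
    rw [← Real.exp_nat_mul]
    congr 1
    push_cast
    ring
  have hpow : ((2 * Real.pi * v) ^ (-(1 : ℝ) / 2)) ^ 2 =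
      (4 * Real.pi * v) ^ (-(1 : ℝ) / 2) * (2 * Real.pi * (v / 2)) ^ (-(1 : ℝ) / 2) := by
    rw [sq, ← Real.mul_rpow (by positivity) (by positivity),
      ← Real.mul_rpow (by positivity) (by positivity)]
    congr 1
    ring
  rw [heatKernel, heatKernel, mul_pow, hexp, hpow, mul_assoc]

lemma gaussianPDFReal_eq_heatKernel (m : ℝ) (v : ℝ≥0) (z : ℝ) :
    gaussianPDFReal m v z = heatKernel v (m - z) := by
  rw [← neg_sub z m, heatKernel_neg_s14, gaussianPDFReal, heatKernel, Real.sqrt_eq_rpow,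
    ← Real.rpow_neg (by positivity), neg_div 2 (1 : ℝ)]

/- At `v = 0` the inequality can be strict: `heatKernel 0 = 0` because `0 ^ (-1/2) = 0`, whereas
`gaussianReal m 0` is a Dirac mass. -/
lemma lintegral_heatKernel_mul_le_lintegral_gaussianReal (m : ℝ) {v : ℝ} (hv : 0 ≤ v)
    (f : ℝ → ℝ≥0∞) :
    ∫⁻ z, ENNReal.ofReal (heatKernel v (m - z)) * f z ≤ ∫⁻ z, f z ∂gaussianReal m v.toNNReal := by
  lift v to ℝ≥0 using hv
  simp_rw [← gaussianPDFReal_eq_heatKernel, Real.toNNReal_coe]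
  rcases eq_or_ne v 0 with rfl | hv
  · simp
  · rw [gaussianReal_of_var_ne_zero m hv, lintegral_withDensity_eq_lintegral_mul_non_measurable _
      (measurable_gaussianPDF m v) (.of_forall fun _ ↦ ENNReal.ofReal_lt_top)]
    rfl

lemma exp_mul_abs_le (c z : ℝ) :
    Real.exp (c * |z|) ≤ Real.exp (c * z) + Real.exp (-c * z) := by
  rw [neg_mul]
  rcases abs_choice z with h | h <;> rw [h]
  · exact le_add_of_nonneg_right (Real.exp_pos _).le
  · rw [mul_neg]
    exact le_add_of_nonneg_left (Real.exp_pos _).le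

lemma lintegral_exp_mul_abs_gaussianReal_le (m : ℝ) (v : ℝ≥0) (c : ℝ) :
    ∫⁻ z, ENNReal.ofReal (Real.exp (c * |z|)) ∂gaussianReal m v ≤
      ENNReal.ofReal (2 * Real.exp (|c * m| + v * c ^ 2 / 2)) := by
  have hint := integrable_exp_mul_gaussianReal (μ := m) (v := v)
  have hint_abs := integrable_exp_mul_abs (hint c) (hint (-c))
  rw [← ofReal_integral_eq_lintegral_ofReal hint_abs (.of_forall fun _ ↦ (Real.exp_pos _).le)]
  refine ENNReal.ofReal_le_ofReal ?_
  calc ∫ z, Real.exp (c * |z|) ∂gaussianReal m v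
      ≤ ∫ z, (Real.exp (c * z) + Real.exp (-c * z)) ∂gaussianReal m v :=
        integral_mono hint_abs ((hint c).add (hint (-c))) (exp_mul_abs_le c)
    _ = mgf id (gaussianReal m v) c + mgf id (gaussianReal m v) (-c) :=
        integral_add (hint c) (hint (-c))
    _ = Real.exp (m * c + v * c ^ 2 / 2) + Real.exp (m * -c + v * c ^ 2 / 2) := by
        simp only [mgf_id_gaussianReal, neg_sq]
    _ ≤ 2 * Real.exp (|c * m| + v * c ^ 2 / 2) := by
        rw [two_mul, mul_neg, mul_comm m c]
        gcongr
        · exact le_abs_self _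
        · exact neg_le_abs _

lemma lintegral_heatKernel_mul_exp_mul_abs_le (m : ℝ) {v : ℝ} (hv : 0 ≤ v) (c : ℝ) :
    ∫⁻ z, ENNReal.ofReal (heatKernel v (m - z) * Real.exp (c * |z|)) ≤
      ENNReal.ofReal (2 * Real.exp (|c * m| + v * c ^ 2 / 2)) := by
  simp_rw [ENNReal.ofReal_mul (heatKernel_nonneg_s14 hv _)]
  have h := lintegral_exp_mul_abs_gaussianReal_le m v.toNNReal c
  rw [Real.coe_toNNReal v hv] at h
  exact (lintegral_heatKernel_mul_le_lintegral_gaussianReal m hv _).trans h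

lemma lintegral_heatKernel_sq_mul_exp_mul_abs_le (m : ℝ) {v : ℝ} (hv : 0 ≤ v) (c : ℝ) :
    ∫⁻ z, ENNReal.ofReal (heatKernel v (m - z) ^ 2 * Real.exp (c * |z|)) ≤
      ENNReal.ofReal ((4 * Real.pi * v) ^ (-(1 : ℝ) / 2) *
        (2 * Real.exp (|c * m| + v * c ^ 2 / 4))) := by
  have hcoeff : 0 ≤ (4 * Real.pi * v) ^ (-(1 : ℝ) / 2) := by positivity
  simp_rw [heatKernel_sq_s14 hv, mul_assoc _ (heatKernel _ _), ENNReal.ofReal_mul hcoeff]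
  rw [lintegral_const_mul' _ _ ENNReal.ofReal_ne_top]
  gcongr
  refine (lintegral_heatKernel_mul_exp_mul_abs_le m (by positivity) c).trans_eq ?_
  ring_nf

lemma lintegral_sq_mul_heatKernel_le {φ : ℝ → ℝ} {A c : ℝ}
    (hφ : ∀ z, |φ z| ≤ A * Real.exp (c * |z|)) {v : ℝ} (hv : 0 ≤ v) :
    ∫⁻ z, ENNReal.ofReal (φ z ^ 2 * heatKernel v z) ≤
      ENNReal.ofReal (A ^ 2 * (2 * Real.exp (2 * c ^ 2 * v))) := by
  have hsq (z : ℝ) : φ z ^ 2 ≤ A ^ 2 * Real.exp (2 * c * |z|) := by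
    calc φ z ^ 2 = |φ z| ^ 2 := (sq_abs _).symm
      _ ≤ (A * Real.exp (c * |z|)) ^ 2 := by gcongr; exact hφ z
      _ = A ^ 2 * Real.exp (2 * c * |z|) := by
        rw [mul_pow, ← Real.exp_nat_mul, mul_assoc 2 c, Nat.cast_ofNat]
  calc ∫⁻ z, ENNReal.ofReal (φ z ^ 2 * heatKernel v z)
      ≤ ∫⁻ z, ENNReal.ofReal (A ^ 2) *
          ENNReal.ofReal (heatKernel v (0 - z) * Real.exp (2 * c * |z|)) := by
        refine lintegral_mono fun z ↦ ?_
        rw [← ENNReal.ofReal_mul (sq_nonneg A), zero_sub, heatKernel_neg_s14, mul_left_comm,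
          mul_comm (φ z ^ 2)]
        have := heatKernel_nonneg_s14 hv z
        gcongr
        exact hsq z
    _ ≤ ENNReal.ofReal (A ^ 2) *
          ENNReal.ofReal (2 * Real.exp (|2 * c * 0| + v * (2 * c) ^ 2 / 2)) := by
        rw [lintegral_const_mul' _ _ ENNReal.ofReal_ne_top]
        gcongr
        exact lintegral_heatKernel_mul_exp_mul_abs_le 0 hv (2 * c)
    _ = ENNReal.ofReal (A ^ 2 * (2 * Real.exp (2 * c ^ 2 * v))) := by
        rw [← ENNReal.ofReal_mul (sq_nonneg A), mul_zero, abs_zero]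
        ring_nf

lemma lintegral_lintegral_heatKernel_sq_mul_sq_mul_heatKernel_le {φ : ℝ → ℝ} {A c : ℝ}
    (hφ : ∀ z, |φ z| ≤ A * Real.exp (c * |z|)) {u s : ℝ} (hu : 0 ≤ u) (hs : 0 ≤ s) (x : ℝ) :
    ∫⁻ y : ℝ, ∫⁻ z : ℝ, ENNReal.ofReal (heatKernel u (x - y) ^ 2 * φ z ^ 2 *
        heatKernel (s * |y|) z) ≤
      ENNReal.ofReal (4 * A ^ 2 * (4 * Real.pi * u) ^ (-(1 : ℝ) / 2) *
        Real.exp (2 * c ^ 2 * s * |x| + c ^ 4 * s ^ 2 * u)) := by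
  have hinner (y : ℝ) : ∫⁻ z : ℝ, ENNReal.ofReal (heatKernel u (x - y) ^ 2 * φ z ^ 2 *
        heatKernel (s * |y|) z) ≤
      ENNReal.ofReal (2 * A ^ 2) *
        ENNReal.ofReal (heatKernel u (x - y) ^ 2 * Real.exp (2 * c ^ 2 * s * |y|)) := by
    simp_rw [mul_assoc (_ ^ 2) (φ _ ^ 2), ENNReal.ofReal_mul (sq_nonneg (heatKernel u (x - y)))]
    rw [lintegral_const_mul' _ _ ENNReal.ofReal_ne_top, mul_left_comm,
      ← ENNReal.ofReal_mul (by positivity)]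
    gcongr
    refine (lintegral_sq_mul_heatKernel_le hφ (by positivity)).trans_eq ?_
    ring_nf
  calc _ ≤ ENNReal.ofReal (2 * A ^ 2) * ∫⁻ y : ℝ,
          ENNReal.ofReal (heatKernel u (x - y) ^ 2 * Real.exp (2 * c ^ 2 * s * |y|)) := by
        rw [← lintegral_const_mul' _ _ ENNReal.ofReal_ne_top]
        exact lintegral_mono hinner
    _ ≤ ENNReal.ofReal (2 * A ^ 2) * ENNReal.ofReal ((4 * Real.pi * u) ^ (-(1 : ℝ) / 2) *
          (2 * Real.exp (|2 * c ^ 2 * s * x| + u * (2 * c ^ 2 * s) ^ 2 / 4))) := by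
        gcongr
        exact lintegral_heatKernel_sq_mul_exp_mul_abs_le x hu _
    _ = _ := by
        rw [← ENNReal.ofReal_mul (by positivity), abs_mul, abs_of_nonneg (by positivity)]
        ring_nf

lemma setLIntegral_Ioo_ofReal_sub_rpow_lt_top {r : ℝ} (hr : -1 < r) (a b : ℝ) :
    ∫⁻ s in Ioo a b, ENNReal.ofReal ((b - s) ^ r) < ⊤ := by
  have h : IntervalIntegrable (fun s : ℝ ↦ (b - s) ^ r) volume a b := by
    simpa using ((intervalIntegral.intervalIntegrable_rpow' hr).comp_sub_left b :
      IntervalIntegrable (fun s : ℝ ↦ (b - s) ^ r) volume (b - (b - a)) (b - 0))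
  exact (h.1.mono_set Ioo_subset_Ioc_self).lintegral_lt_top

theorem condition_finite_polynomial_general {φ : ℝ → ℝ} {A c : ℝ}
    (hφ : ∀ z, |φ z| ≤ A * Real.exp (c * |z|)) (t x : ℝ) :
    (∫⁻ s in Ioo (0:ℝ) t, ∫⁻ y : ℝ, ∫⁻ z : ℝ,
      ENNReal.ofReal (heatKernel (t - s) (x - y) ^ 2 * φ z ^ 2 *
        heatKernel (s * |y|) z)) < ⊤ := by
  set K := 4 * A ^ 2 * (4 * Real.pi) ^ (-(1 : ℝ) / 2) *
    Real.exp (2 * c ^ 2 * t * |x| + c ^ 4 * t ^ 2 * t)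
  have hbound : ∀ s ∈ Ioo 0 t, ∫⁻ y : ℝ, ∫⁻ z : ℝ,
      ENNReal.ofReal (heatKernel (t - s) (x - y) ^ 2 * φ z ^ 2 * heatKernel (s * |y|) z) ≤
        ENNReal.ofReal K * ENNReal.ofReal ((t - s) ^ (-(1 : ℝ) / 2)) := by
    rintro s ⟨hs, hst⟩
    have hts : 0 ≤ t - s := sub_nonneg.2 hst.le
    refine (lintegral_lintegral_heatKernel_sq_mul_sq_mul_heatKernel_le hφ hts hs.le x).trans ?_
    rw [← ENNReal.ofReal_mul (by positivity), Real.mul_rpow (by positivity) hts, ← mul_assoc,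
      mul_right_comm]
    unfold K
    gcongr
    exact sub_le_self t hs.le
  refine (setLIntegral_mono' measurableSet_Ioo hbound).trans_lt ?_
  rw [lintegral_const_mul' _ _ ENNReal.ofReal_ne_top]
  exact ENNReal.mul_lt_top ENNReal.ofReal_lt_top
    (setLIntegral_Ioo_ofReal_sub_rpow_lt_top (by norm_num) 0 t)

lemma one_add_abs_rpow_le_exp {α : ℝ} (hα : 0 ≤ α) (z : ℝ) :
    (1 + |z|) ^ α ≤ Real.exp (α * |z|) := by
  rw [mul_comm, Real.exp_mul, add_comm]
  gcongr
  exact Real.add_one_le_exp |z|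

/-- If `φ` is measurable with `|φ(z)| ≤ C(1+|z|)^α` for some `C > 0`, `α ≥ 0`, then
for every `t > 0` and `x ∈ ℝ`,
`∫₀ᵗ ∫_ℝ ∫_ℝ p_{t-s}(x-y)² φ(z)² p_{s|y|}(z) dz dy ds < ∞`. -/
theorem condition_finite_polynomial (φ : ℝ → ℝ) (hmeas : Measurable φ)
    (C α : ℝ) (hC : 0 < C) (hα : 0 ≤ α)
    (hbound : ∀ z : ℝ, |φ z| ≤ C * (1 + |z|) ^ α) (t : ℝ) (ht : 0 < t) (x : ℝ) :
    (∫⁻ s in Ioo (0:ℝ) t, ∫⁻ y : ℝ, ∫⁻ z : ℝ,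
      ENNReal.ofReal (heatKernel (t - s) (x - y) ^ 2 * φ z ^ 2 *
        heatKernel (s * |y|) z)) < ⊤ :=
  condition_finite_polynomial_general
    (fun z ↦ (hbound z).trans (by gcongr; exact one_add_abs_rpow_le_exp hα z)) t x
end

section
/- For every α ≥ 0, every L ≥ 0 and every x ∈ ℝ, one has lim_{t→∞} t^{−3α/2} ∫₀¹ ∫_ℝ (1−s)^{−1/2} p_{1−s}( x/√t − y ) · min( 1, L ( t^{3/2} s |y| )^{−1/2} ) dy ds = 0, provided that α > 0 or L ≥ 0 (for α = 0 the limit holds by dominated convergence since the min-term tends to 0 pointwise). -/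
open MeasureTheory Filter Set

/-!
Since `|min 1 a| ≤ |a|`, the truncated factor is at most `|L| (t^{3/2} s |y|)^{-1/2}` in absolute
value, which pulls a factor `t^{-3/4}` out of the integral. What remains is bounded uniformly in `x`
and `t`: the heat kernel `p_τ` has mass one and height at most `(2πτ)^{-1/2}`, so splitting at
`|y| = √τ` gives `∫ p_τ(z - y) |y|^{-1/2} dy ≤ C τ^{-1/4}`, and after setting `τ = 1 - s` the
`s`-integrand is a constant times the Beta weight `s^{-1/2} (1 - s)^{-3/4}`. Hence the double
integral is `O(t^{-3/4})`.
-/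

lemma heatKernel_nonneg_s17 {τ : ℝ} (hτ : 0 ≤ τ) (x : ℝ) : 0 ≤ heatKernel τ x := by
  unfold heatKernel
  positivity

lemma heatKernel_le {τ : ℝ} (hτ : 0 ≤ τ) (x : ℝ) :
    heatKernel τ x ≤ (2 * Real.pi * τ) ^ (-(1:ℝ)/2) :=
  mul_le_of_le_one_right (by positivity) <| Real.exp_le_one_iff.2 <|
    div_nonpos_of_nonpos_of_nonneg (neg_nonpos.2 (sq_nonneg x)) (by positivity)

lemma heatKernel_eq_gaussianPDFReal {τ : ℝ} (hτ : 0 ≤ τ) :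
    heatKernel τ = ProbabilityTheory.gaussianPDFReal 0 τ.toNNReal := by
  funext x
  have h : 0 ≤ 2 * Real.pi * τ := by positivity
  simp only [heatKernel, ProbabilityTheory.gaussianPDFReal, sub_zero, Real.coe_toNNReal τ hτ]
  rw [Real.sqrt_eq_rpow, ← Real.rpow_neg h, neg_div]

lemma integrable_heatKernel {τ : ℝ} (hτ : 0 ≤ τ) : Integrable (heatKernel τ) := by
  rw [heatKernel_eq_gaussianPDFReal hτ]
  exact ProbabilityTheory.integrable_gaussianPDFReal _ _

lemma integral_heatKernel {τ : ℝ} (hτ : 0 < τ) : ∫ y, heatKernel τ y = 1 := by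
  rw [heatKernel_eq_gaussianPDFReal hτ.le]
  exact ProbabilityTheory.integral_gaussianPDFReal_eq_one _ (Real.toNNReal_pos.2 hτ).ne'

section SingularWeight

variable {p : ℝ}

lemma integrable_indicator_Iic_rpow_abs (hp : -1 < p) (R : ℝ) :
    Integrable fun y : ℝ => (Iic R).indicator (· ^ p) |y| := by
  have h : IntegrableOn (fun u : ℝ => u ^ p) (Ioc 0 R) :=
    (intervalIntegral.intervalIntegrable_rpow' hp).1
  have hradial : IntegrableOn ((Iic R).indicator (· ^ p)) (Ioi (0:ℝ)) := by
    rwa [IntegrableOn, integrable_indicator_iff measurableSet_Iic, IntegrableOn,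
      Measure.restrict_restrict measurableSet_Iic, inter_comm, Ioi_inter_Iic]
  simpa [← Real.norm_eq_abs, integrable_fun_norm_addHaar volume] using hradial

lemma integral_indicator_Iic_rpow_abs (hp : -1 < p) {R : ℝ} (hR : 0 ≤ R) :
    ∫ y : ℝ, (Iic R).indicator (· ^ p) |y| = 2 * (R ^ (p + 1) / (p + 1)) := by
  rw [integral_comp_abs, setIntegral_indicator measurableSet_Iic, Ioi_inter_Iic,
    ← intervalIntegral.integral_of_le hR, integral_rpow (Or.inl hp),
    Real.zero_rpow (by linarith), sub_zero]

lemma mul_rpow_abs_le_of_le (hp : p ≤ 0) {a M R : ℝ} (ha : 0 ≤ a) (haM : a ≤ M) (hR : 0 < R)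
    (y : ℝ) : a * |y| ^ p ≤ a * R ^ p + M * (Iic R).indicator (· ^ p) |y| := by
  rcases le_or_gt |y| R with hy | hy
  · rw [indicator_of_mem (mem_Iic.2 hy)]
    have : a * |y| ^ p ≤ M * |y| ^ p := by gcongr
    have : 0 ≤ a * R ^ p := by positivity
    linarith
  · rw [indicator_of_notMem (notMem_Iic.2 hy), mul_zero, add_zero]
    exact mul_le_mul_of_nonneg_left (Real.rpow_le_rpow_of_nonpos hR hy.le hp) ha

variable {f : ℝ → ℝ} {M : ℝ}

lemma integrable_mul_rpow_abs (hp : -1 < p) (hp' : p ≤ 0) (hf : Integrable f)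
    (hf₀ : ∀ y, 0 ≤ f y) (hfM : ∀ y, f y ≤ M) : Integrable fun y => f y * |y| ^ p := by
  refine ((hf.mul_const (1 ^ p)).add ((integrable_indicator_Iic_rpow_abs hp 1).const_mul M)).mono'
    (hf.aestronglyMeasurable.mul (Measurable.aestronglyMeasurable (by fun_prop)))
    (.of_forall fun y => ?_)
  rw [Real.norm_of_nonneg (mul_nonneg (hf₀ y) (by positivity))]
  exact mul_rpow_abs_le_of_le hp' (hf₀ y) (hfM y) one_pos y

lemma integral_mul_rpow_abs_le (hp : -1 < p) (hp' : p ≤ 0) (hf : Integrable f)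
    (hf₀ : ∀ y, 0 ≤ f y) (hfM : ∀ y, f y ≤ M) {R : ℝ} (hR : 0 < R) :
    ∫ y, f y * |y| ^ p ≤ (∫ y, f y) * R ^ p + M * (2 * (R ^ (p + 1) / (p + 1))) := by
  have hfar := hf.mul_const (R ^ p)
  have hnear := (integrable_indicator_Iic_rpow_abs hp R).const_mul M
  calc ∫ y, f y * |y| ^ p
      ≤ ∫ y, (f y * R ^ p + M * (Iic R).indicator (· ^ p) |y|) :=
        integral_mono (integrable_mul_rpow_abs hp hp' hf hf₀ hfM) (hfar.add hnear)
          fun y => mul_rpow_abs_le_of_le hp' (hf₀ y) (hfM y) hR y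
    _ = _ := by
        rw [integral_add hfar hnear, integral_mul_const, integral_const_mul,
          integral_indicator_Iic_rpow_abs hp hR.le]

lemma integrable_heatKernel_sub_mul_rpow_abs (hp : -1 < p) (hp' : p ≤ 0) {τ : ℝ} (hτ : 0 ≤ τ)
    (z : ℝ) : Integrable fun y => heatKernel τ (z - y) * |y| ^ p :=
  integrable_mul_rpow_abs hp hp' ((integrable_heatKernel hτ).comp_sub_left z)
    (fun _ => heatKernel_nonneg_s17 hτ _) fun _ => heatKernel_le hτ _

/-- The constant in the bound `∫ p_τ(z - y) |y|^p dy ≤ C_p τ^{p/2}`, for `-1 < p ≤ 0`: the `1` comes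
from `|y| > √τ`, the other term from `|y| ≤ √τ`. -/
noncomputable def heatKernelRpowConst (p : ℝ) : ℝ :=
  1 + (2 * Real.pi) ^ (-(1:ℝ)/2) * (2 / (p + 1))

lemma integral_heatKernel_sub_mul_rpow_abs_le (hp : -1 < p) (hp' : p ≤ 0) {τ : ℝ} (hτ : 0 < τ)
    (z : ℝ) : ∫ y, heatKernel τ (z - y) * |y| ^ p ≤ heatKernelRpowConst p * τ ^ (p / 2) := by
  have hsplit := integral_mul_rpow_abs_le hp hp' ((integrable_heatKernel hτ.le).comp_sub_left z)
    (fun _ => heatKernel_nonneg_s17 hτ.le _) (fun _ => heatKernel_le hτ.le _) (Real.sqrt_pos.2 hτ)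
  have hfar : √τ ^ p = τ ^ (p / 2) := by
    rw [Real.sqrt_eq_rpow, ← Real.rpow_mul hτ.le, one_div_mul_eq_div]
  have hnear : τ ^ (-(1:ℝ)/2) * √τ ^ (p + 1) = τ ^ (p / 2) := by
    rw [Real.sqrt_eq_rpow, ← Real.rpow_mul hτ.le, ← Real.rpow_add hτ]
    ring_nf
  rw [integral_sub_left_eq_self (heatKernel τ), integral_heatKernel hτ, hfar,
    Real.mul_rpow Real.two_pi_pos.le hτ.le] at hsplit
  refine hsplit.trans_eq ?_
  rw [heatKernelRpowConst, add_mul, one_mul, ← hnear]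
  ring

end SingularWeight

lemma integrableOn_rpow_mul_one_sub_rpow {p q : ℝ} (hp : -1 < p) (hq : -1 < q) :
    IntegrableOn (fun s : ℝ => s ^ p * (1 - s) ^ q) (Ioo 0 1) := by
  have hbeta := Complex.betaIntegral_convergent (u := (p + 1 : ℝ)) (v := (q + 1 : ℝ))
    (by simpa using neg_lt_iff_pos_add.1 hp) (by simpa using neg_lt_iff_pos_add.1 hq)
  rw [intervalIntegrable_iff_integrableOn_Ioo_of_le zero_le_one] at hbeta
  refine IntegrableOn.congr_fun hbeta.norm (fun s hs => ?_) measurableSet_Ioo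
  have hs' : 0 < 1 - s := sub_pos.2 hs.2
  rw [norm_mul, ← Complex.ofReal_one, ← Complex.ofReal_sub 1 s,
    Complex.norm_cpow_eq_rpow_re_of_pos hs.1, Complex.norm_cpow_eq_rpow_re_of_pos hs']
  simp

lemma abs_min_one_le_abs (a : ℝ) : |min 1 a| ≤ |a| :=
  abs_le.2 ⟨le_min (by linarith [abs_nonneg a]) (neg_abs_le a),
    (min_le_right 1 a).trans (le_abs_self a)⟩

section Truncation

variable {p q : ℝ}

lemma norm_heatKernel_mul_truncation_le (L z y : ℝ) {A s : ℝ} (hA : 0 ≤ A)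
    (hs : s ∈ Icc (0 : ℝ) 1) :
    ‖(1 - s) ^ q * heatKernel (1 - s) (z - y) * min 1 (L * (A * s * |y|) ^ p)‖ ≤
      |L| * A ^ p * (s ^ p * (1 - s) ^ q) * (heatKernel (1 - s) (z - y) * |y| ^ p) := by
  have hs₀ : 0 ≤ s := hs.1
  have hs₁ : 0 ≤ 1 - s := sub_nonneg.2 hs.2
  have hk : 0 ≤ (1 - s) ^ q * heatKernel (1 - s) (z - y) :=
    mul_nonneg (by positivity) (heatKernel_nonneg_s17 hs₁ _)
  calc ‖(1 - s) ^ q * heatKernel (1 - s) (z - y) * min 1 (L * (A * s * |y|) ^ p)‖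
      = (1 - s) ^ q * heatKernel (1 - s) (z - y) * |min 1 (L * (A * s * |y|) ^ p)| := by
        rw [norm_mul, Real.norm_of_nonneg hk, Real.norm_eq_abs]
    _ ≤ (1 - s) ^ q * heatKernel (1 - s) (z - y) * |L * (A * s * |y|) ^ p| :=
        mul_le_mul_of_nonneg_left (abs_min_one_le_abs _) hk
    _ = _ := by
        rw [abs_mul, abs_of_nonneg (by positivity : 0 ≤ (A * s * |y|) ^ p),
          Real.mul_rpow (by positivity) (abs_nonneg y), Real.mul_rpow hA hs₀]
        ring

lemma norm_integral_heatKernel_mul_truncation_le (hp : -1 < p) (hp' : p ≤ 0) (L z : ℝ) {A s : ℝ}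
    (hA : 0 ≤ A) (hs : s ∈ Ioo (0 : ℝ) 1) :
    ‖∫ y, (1 - s) ^ q * heatKernel (1 - s) (z - y) * min 1 (L * (A * s * |y|) ^ p)‖ ≤
      |L| * heatKernelRpowConst p * A ^ p * (s ^ p * (1 - s) ^ (q + p / 2)) := by
  have hs₀ : 0 ≤ s := hs.1.le
  have hs₁ : 0 < 1 - s := sub_pos.2 hs.2
  calc ‖∫ y, (1 - s) ^ q * heatKernel (1 - s) (z - y) * min 1 (L * (A * s * |y|) ^ p)‖
      ≤ ∫ y, |L| * A ^ p * (s ^ p * (1 - s) ^ q) * (heatKernel (1 - s) (z - y) * |y| ^ p) :=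
        norm_integral_le_of_norm_le
          ((integrable_heatKernel_sub_mul_rpow_abs hp hp' hs₁.le z).const_mul _)
          (.of_forall fun y => norm_heatKernel_mul_truncation_le L z y hA
            (Ioo_subset_Icc_self hs))
    _ = |L| * A ^ p * (s ^ p * (1 - s) ^ q) * ∫ y, heatKernel (1 - s) (z - y) * |y| ^ p :=
        integral_const_mul _ _
    _ ≤ |L| * A ^ p * (s ^ p * (1 - s) ^ q) * (heatKernelRpowConst p * (1 - s) ^ (p / 2)) := by
        gcongr
        exact integral_heatKernel_sub_mul_rpow_abs_le hp hp' hs₁ z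
    _ = _ := by
        rw [Real.rpow_add hs₁]
        ring

lemma exists_norm_integral_integral_heatKernel_mul_truncation_le (hp : -1 < p) (hp' : p ≤ 0)
    (hq : -1 < q + p / 2) (L : ℝ) :
    ∃ C, ∀ z A : ℝ, 0 ≤ A →
      ‖∫ s in Ioo (0:ℝ) 1, ∫ y,
        (1 - s) ^ q * heatKernel (1 - s) (z - y) * min 1 (L * (A * s * |y|) ^ p)‖ ≤ C * A ^ p := by
  refine ⟨|L| * heatKernelRpowConst p * ∫ s in Ioo (0:ℝ) 1, s ^ p * (1 - s) ^ (q + p / 2),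
    fun z A hA => ?_⟩
  refine (norm_integral_le_of_norm_le ((integrableOn_rpow_mul_one_sub_rpow hp hq).const_mul _)
    (ae_restrict_of_forall_mem measurableSet_Ioo fun s hs =>
      norm_integral_heatKernel_mul_truncation_le hp hp' L z hA hs)).trans_eq ?_
  rw [integral_const_mul]
  ring

end Truncation

theorem tendsto_truncation_integral_general (α : ℝ) (hα : -(1 / 2) < α) (L x : ℝ) :
    Tendsto (fun t : ℝ => t ^ (-(3 * α) / 2) * ∫ s in Ioo (0:ℝ) 1, ∫ y : ℝ,
        (1 - s) ^ (-(1:ℝ)/2) * heatKernel (1 - s) (x / Real.sqrt t - y) *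
          min 1 (L * (t ^ ((3:ℝ)/2) * s * |y|) ^ (-(1:ℝ)/2)))
      atTop (nhds 0) := by
  obtain ⟨C, hC⟩ := exists_norm_integral_integral_heatKernel_mul_truncation_le
    (p := -(1:ℝ)/2) (q := -(1:ℝ)/2) (by norm_num) (by norm_num) (by norm_num) L
  have hdecay : Tendsto (fun t : ℝ => C * t ^ (-(3 * α / 2 + 3 / 4))) atTop (nhds 0) := by
    simpa only [mul_zero] using (tendsto_rpow_neg_atTop (by linarith)).const_mul C
  refine squeeze_zero_norm' ?_ hdecay
  filter_upwards [eventually_gt_atTop 0] with t ht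
  have hpow : t ^ (-(3 * α) / 2) * (t ^ ((3:ℝ)/2)) ^ (-(1:ℝ)/2) = t ^ (-(3 * α / 2 + 3 / 4)) := by
    rw [← Real.rpow_mul ht.le, ← Real.rpow_add ht]
    ring_nf
  rw [norm_mul, Real.norm_of_nonneg (by positivity : 0 ≤ t ^ (-(3 * α) / 2)), ← hpow,
    mul_left_comm]
  gcongr
  exact hC _ _ (by positivity)

/-- For every `α ≥ 0`, `L ≥ 0` and `x ∈ ℝ`,
`lim_{t→∞} t^{-3α/2} ∫₀¹ ∫_ℝ (1-s)^{-1/2} p_{1-s}(x/√t - y)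
  min(1, L (t^{3/2} s |y|)^{-1/2}) dy ds = 0`. -/
theorem tendsto_truncation_integral (α : ℝ) (hα : 0 ≤ α) (L : ℝ) (hL : 0 ≤ L) (x : ℝ) :
    Tendsto (fun t : ℝ => t ^ (-(3 * α) / 2) * ∫ s in Ioo (0:ℝ) 1, ∫ y : ℝ,
        (1 - s) ^ (-(1:ℝ)/2) * heatKernel (1 - s) (x / Real.sqrt t - y) *
          min 1 (L * (t ^ ((3:ℝ)/2) * s * |y|) ^ (-(1:ℝ)/2)))
      atTop (nhds 0) := by
  exact tendsto_truncation_integral_general α (by linarith) L x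
end
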